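/- For any integers m ≥ 2 and n ≥ 1, the simplicial complex Hom_+(C_m, K_n) is homotopy equivalent to a wedge of 2^n copies of S^{nk−1} if m = 3k, and to S^{nk−1} if m = 3k ± 1. -/

import Mathlib

open Finset

noncomputable section
namespace Lovasz




structure Graph where
  V : Type
  fintypeV : Fintype V
  adj : V → V → Prop
  symm : ∀ {x y : V}, adj x y → adj y x

attribute [instance] Graph.fintypeV

def Graph.Loopless (G : Graph) : Prop := ∀ v : G.V, ¬ G.adj v v

def GraphHom (G H : Graph) : Type :=
  {f : G.V → H.V // ∀ x y : G.V, G.adj x y → H.adj (f x) (f y)}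

@[reducible] def completeGraph (n : ℕ) : Graph where
  V := Fin n
  fintypeV := inferInstance
  adj x y := x ≠ y
  symm h := h.symm

def chromaticNumber (G : Graph) : ℕ :=
  sInf {n : ℕ | Nonempty (GraphHom G (completeGraph n))}

@[reducible] def oddCycle (r : ℕ) : Graph where
  V := ZMod (2 * r + 1)
  fintypeV := inferInstance
  adj x y := x = y + 1 ∨ y = x + 1
  symm h := h.symm

/-- The cycle with `m` vertices (trivial graph for `m = 0`). -/
@[reducible] def cycleGraph : ℕ → Graph
  | 0 => ⟨Empty, inferInstance, fun _ _ => False, fun h => h⟩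
  | (n+1) =>
    { V := ZMod (n+1)
      fintypeV := inferInstance
      adj := fun x y => x = y + 1 ∨ y = x + 1
      symm := fun h => h.symm }

/-- The geometric realization of the polyhedral complex `Hom(G,H)`: the space of functions
assigning to each vertex of `G` a probability distribution on `V(H)`, such that any choice of
vertices from the supports yields a graph homomorphism. -/
abbrev HomComplex (G H : Graph) : Type :=
  {f : G.V → H.V → ℝ //
    (∀ v w, 0 ≤ f v w) ∧ (∀ v, ∑ w, f v w = 1) ∧
    ∀ x y : G.V, G.adj x y → ∀ a b : H.V, f x a ≠ 0 → f y b ≠ 0 → H.adj a b}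

/-- The geometric realization of the simplicial complex `Hom₊(G,H)`. -/
abbrev HomPlus (G H : Graph) : Type :=
  {f : G.V → H.V → ℝ //
    (∀ v w, 0 ≤ f v w) ∧ (∑ v, ∑ w, f v w = 1) ∧
    ∀ x y : G.V, G.adj x y → ∀ a b : H.V, f x a ≠ 0 → f y b ≠ 0 → H.adj a b}

/-- The geometric realization of the independence complex `Ind(G)`. -/
abbrev IndSpace (G : Graph) : Type :=
  {f : G.V → ℝ //
    (∀ v, 0 ≤ f v) ∧ (∑ v, f v = 1) ∧
    ∀ x y : G.V, G.adj x y → f x = 0 ∨ f y = 0}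

/-- The map `Hom(G',H) → Hom(G,H)` induced by a graph homomorphism `ι : G → G'`. -/
def precompHom {G G' : Graph} (ι : GraphHom G G') (H : Graph) :
    C(HomComplex G' H, HomComplex G H) where
  toFun f := ⟨fun v w => f.1 (ι.1 v) w,
    fun v w => f.2.1 (ι.1 v) w,
    fun v => f.2.2.1 (ι.1 v),
    fun x y h a b ha hb => f.2.2.2 (ι.1 x) (ι.1 y) (ι.2 x y h) a b ha hb⟩
  continuous_toFun := by
    apply Continuous.subtype_mk
    apply continuous_pi; intro v
    apply continuous_pi; intro w
    exact (continuous_apply w).comp ((continuous_apply (ι.1 v)).comp continuous_subtype_val)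

/-- The map `Hom₊(G',H) → Hom₊(G,H)` induced by an *invertible* graph homomorphism is only used
for involutions, where precomposition preserves the normalization; for bijective `ι` the total
sum is preserved. -/
def precompHomPlus {G : Graph} (ι : GraphHom G G) (hbij : Function.Bijective ι.1) (H : Graph) :
    C(HomPlus G H, HomPlus G H) where
  toFun f := ⟨fun v w => f.1 (ι.1 v) w,
    fun v w => f.2.1 (ι.1 v) w,
    by
      show ∑ v, ∑ w, f.1 (ι.1 v) w = 1
      have h2 : ∑ v, ∑ w, f.1 (ι.1 v) w = ∑ v, ∑ w, f.1 v w :=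
        Fintype.sum_bijective ι.1 hbij _ _ (fun v => rfl)
      rw [h2]; exact f.2.2.1,
    fun x y h a b ha hb => f.2.2.2 (ι.1 x) (ι.1 y) (ι.2 x y h) a b ha hb⟩
  continuous_toFun := by
    apply Continuous.subtype_mk
    apply continuous_pi; intro v
    apply continuous_pi; intro w
    exact (continuous_apply w).comp ((continuous_apply (ι.1 v)).comp continuous_subtype_val)

lemma precompHom_invol {G : Graph} (γ : GraphHom G G) (hγ : ∀ v, γ.1 (γ.1 v) = v) (H : Graph) :
    ∀ f, precompHom γ H (precompHom γ H f) = f := by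
  intro f
  apply Subtype.ext
  funext v w
  show f.1 (γ.1 (γ.1 v)) w = f.1 v w
  rw [hγ]

lemma precompHomPlus_invol {G : Graph} (γ : GraphHom G G) (hbij : Function.Bijective γ.1)
    (hγ : ∀ v, γ.1 (γ.1 v) = v) (H : Graph) :
    ∀ f, precompHomPlus γ hbij H (precompHomPlus γ hbij H f) = f := by
  intro f
  apply Subtype.ext
  funext v w
  show f.1 (γ.1 (γ.1 v)) w = f.1 v w
  rw [hγ]

/-- The reflection `x ↦ -x` of the odd cycle. -/
def cycleReflect (r : ℕ) : GraphHom (oddCycle r) (oddCycle r) :=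
  ⟨fun x => (-x : ZMod (2 * r + 1)), by
    intro x y h
    change (x : ZMod (2 * r + 1)) = y + 1 ∨ y = x + 1 at h
    change (-x : ZMod (2 * r + 1)) = -y + 1 ∨ (-y : ZMod (2 * r + 1)) = -x + 1
    rcases h with h | h
    · right; rw [h]; ring
    · left; rw [h]; ring⟩

lemma cycleReflect_invol (r : ℕ) : ∀ v, (cycleReflect r).1 ((cycleReflect r).1 v) = v :=
  fun v => neg_neg (v : ZMod (2 * r + 1))

lemma cycleReflect_bijective (r : ℕ) : Function.Bijective (cycleReflect r).1 :=
  Function.Involutive.bijective (fun v => neg_neg (v : ZMod (2 * r + 1)))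

open scoped Topology in
/-- `k`-connectedness (`k ≥ -1`): nonempty, path-connected (when `k ≥ 0`), and all homotopy
groups `π_i` vanish for `1 ≤ i ≤ k`. -/
def KConnected (k : ℤ) (X : Type) [TopologicalSpace X] : Prop :=
  Nonempty X ∧ ((0:ℤ) ≤ k → PathConnectedSpace X) ∧
    ∀ i : ℕ, 1 ≤ i → (i : ℤ) ≤ k → ∀ x : X, Subsingleton (HomotopyGroup (Fin i) X x)



/-- The `d`-dimensional sphere, as the unit sphere in `ℝ^{d+1}`. -/
abbrev nSphere (d : ℕ) : Type :=
  (Metric.sphere (0 : EuclideanSpace ℝ (Fin (d+1))) 1 : Set (EuclideanSpace ℝ (Fin (d+1))))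

/-- The antipodal involution of the `d`-sphere. -/
def nSphereNeg (d : ℕ) : C(nSphere d, nSphere d) where
  toFun x := ⟨-x.1, by
    have hx := x.2
    rw [Metric.mem_sphere, dist_zero_right] at hx ⊢
    rwa [norm_neg]⟩
  continuous_toFun := by
    apply Continuous.subtype_mk
    exact continuous_subtype_val.neg

lemma nSphereNeg_invol (d : ℕ) : ∀ x, nSphereNeg d (nSphereNeg d x) = x := by
  intro x
  apply Subtype.ext
  show -(-x.1) = x.1
  exact neg_neg _

/-- A base point on the `d`-sphere. -/
def northPole (d : ℕ) : nSphere d :=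
  ⟨EuclideanSpace.single (0 : Fin (d+1)) (1 : ℝ), by
    rw [Metric.mem_sphere, dist_zero_right, EuclideanSpace.norm_single]
    norm_num⟩

/-- The setoid gluing `m` spheres of dimension `d` at their base points. -/
def wedgeSetoid (m d : ℕ) : Setoid (Fin m × nSphere d) where
  r a b := a = b ∨ (a.2 = northPole d ∧ b.2 = northPole d)
  iseqv := by
    constructor
    · exact fun a => Or.inl rfl
    · rintro a b (rfl | ⟨h1, h2⟩)
      · exact Or.inl rfl
      · exact Or.inr ⟨h2, h1⟩
    · rintro a b c (rfl | ⟨h1, h2⟩) (rfl | ⟨h3, h4⟩)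
      · exact Or.inl rfl
      · exact Or.inr ⟨h3, h4⟩
      · exact Or.inr ⟨h1, h2⟩
      · exact Or.inr ⟨h1, h4⟩

/-- The wedge (one-point union) of `m` copies of the `d`-sphere. -/
abbrev WedgeOfSpheres (m d : ℕ) : Type := Quotient (wedgeSetoid m d)

/-- The setoid for the topological join `X * Y` on `X × Y × [0,1]`:
at time `0` collapse `Y`, at time `1` collapse `X`. -/
def joinSetoid (X Y : Type) [TopologicalSpace X] [TopologicalSpace Y] :
    Setoid (X × Y × unitInterval) where
  r a b := a = b ∨ (a.2.2 = 0 ∧ b.2.2 = 0 ∧ a.1 = b.1) ∨ (a.2.2 = 1 ∧ b.2.2 = 1 ∧ a.2.1 = b.2.1)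
  iseqv := by
    constructor
    · exact fun a => Or.inl rfl
    · rintro a b (rfl | ⟨h1, h2, h3⟩ | ⟨h1, h2, h3⟩)
      · exact Or.inl rfl
      · exact Or.inr (Or.inl ⟨h2, h1, h3.symm⟩)
      · exact Or.inr (Or.inr ⟨h2, h1, h3.symm⟩)
    · rintro a b c (rfl | ⟨h1, h2, h3⟩ | ⟨h1, h2, h3⟩) (rfl | ⟨h4, h5, h6⟩ | ⟨h4, h5, h6⟩)
      · exact Or.inl rfl
      · exact Or.inr (Or.inl ⟨h4, h5, h6⟩)
      · exact Or.inr (Or.inr ⟨h4, h5, h6⟩)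
      · exact Or.inr (Or.inl ⟨h1, h2, h3⟩)
      · exact Or.inr (Or.inl ⟨h1, h5, h3.trans h6⟩)
      · exact absurd (congrArg Subtype.val (h4.symm.trans h2))
          (by simp)
      · exact Or.inr (Or.inr ⟨h1, h2, h3⟩)
      · exact absurd (congrArg Subtype.val (h2.symm.trans h4))
          (by simp)
      · exact Or.inr (Or.inr ⟨h1, h5, h3.trans h6⟩)

/-- The topological join `X * Y`. -/
abbrev TopJoin (X Y : Type) [TopologicalSpace X] [TopologicalSpace Y] : Type :=
  Quotient (joinSetoid X Y)

/-- A continuous map is a homotopy equivalence. -/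
def IsHomotopyEquiv {X Y : Type} [TopologicalSpace X] [TopologicalSpace Y] (f : C(X, Y)) : Prop :=
  ∃ g : C(Y, X), (g.comp f).Homotopic (ContinuousMap.id X) ∧
    (f.comp g).Homotopic (ContinuousMap.id Y)

/-- A `ℤ/2`-equivariant homotopy equivalence between spaces with involutions, where all maps and
homotopies are equivariant. -/
def IsZ2HomotopyEquiv {X Y : Type} [TopologicalSpace X] [TopologicalSpace Y]
    (τ : C(X, X)) (ρ : C(Y, Y)) : Prop :=
  ∃ (f : C(X, Y)) (g : C(Y, X)),
    (∀ x, f (τ x) = ρ (f x)) ∧ (∀ y, g (ρ y) = τ (g y)) ∧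
    (∃ H : (g.comp f).Homotopy (ContinuousMap.id X), ∀ x t, H (t, τ x) = τ (H (t, x))) ∧
    (∃ K : (f.comp g).Homotopy (ContinuousMap.id Y), ∀ y t, K (t, ρ y) = ρ (K (t, y)))

open scoped unitInterval

section framework
variable {X Y Z : Type} [TopologicalSpace X] [TopologicalSpace Y] [TopologicalSpace Z]

/-- only the base point is sent to the base point -/
def Pt (x0 : X) (y0 : Y) (f : C(X, Y)) : Prop := ∀ x, f x = y0 → x = x0

def PHE (x0 : X) (y0 : Y) : Prop :=
  ∃ (f : C(X, Y)) (g : C(Y, X)), Pt x0 y0 f ∧ Pt y0 x0 g ∧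
    ContinuousMap.HomotopicWith (g.comp f) (ContinuousMap.id X) (Pt x0 x0) ∧
    ContinuousMap.HomotopicWith (f.comp g) (ContinuousMap.id Y) (Pt y0 y0)

lemma mkHW {x0 : X} {y0 : Y} {f0 f1 : C(X, Y)} (H : I × X → Y) (hc : Continuous H)
    (h0 : ∀ x, H (0, x) = f0 x) (h1 : ∀ x, H (1, x) = f1 x)
    (hp : ∀ t x, H (t, x) = y0 → x = x0) :
    ContinuousMap.HomotopicWith f0 f1 (Pt x0 y0) :=
  ⟨{ toFun := H, continuous_toFun := hc, map_zero_left := h0, map_one_left := h1,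
     prop' := fun t x h => hp t x h }⟩

lemma exHW {x0 : X} {y0 : Y} {f0 f1 : C(X, Y)}
    (h : ContinuousMap.HomotopicWith f0 f1 (Pt x0 y0)) :
    ∃ H : I × X → Y, Continuous H ∧ (∀ x, H (0, x) = f0 x) ∧ (∀ x, H (1, x) = f1 x) ∧
      ∀ t x, H (t, x) = y0 → x = x0 := by
  obtain ⟨F⟩ := h
  exact ⟨F, F.continuous, F.apply_zero, F.apply_one, fun t x hx => F.prop t x hx⟩

lemma PHE.symm {x0 : X} {y0 : Y} (h : PHE x0 y0) : PHE y0 x0 := by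
  obtain ⟨f, g, a, b, c, d⟩ := h
  exact ⟨g, f, b, a, d, c⟩

lemma PHE.trans {x0 : X} {y0 : Y} {z0 : Z} (h : PHE x0 y0) (h' : PHE y0 z0) : PHE x0 z0 := by
  obtain ⟨f, g, a, b, c, d⟩ := h
  obtain ⟨f', g', a', b', c', d'⟩ := h'
  refine ⟨f'.comp f, g.comp g', fun x hx => a _ (a' _ hx), fun x hx => b' _ (b _ hx), ?_, ?_⟩
  · refine ContinuousMap.HomotopicWith.trans (g := g.comp f) ?_ c
    obtain ⟨H, hc, h0, h1, hp⟩ := exHW c'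
    refine mkHW (fun p => g (H (p.1, f p.2))) (by fun_prop) ?_ ?_ ?_
    · intro x; simp [h0]
    · intro x; simp [h1]
    · intro t x hx; exact a _ (hp _ _ (b _ hx))
  · refine ContinuousMap.HomotopicWith.trans (g := f'.comp g') ?_ d'
    obtain ⟨H, hc, h0, h1, hp⟩ := exHW d
    refine mkHW (fun p => f' (H (p.1, g' p.2))) (by fun_prop) ?_ ?_ ?_
    · intro x; simp [h0]
    · intro x; simp [h1]
    · intro t x hx; exact b' _ (hp _ _ (a' _ hx))

lemma PHE.ofHomeo {x0 : X} {y0 : Y} (e : X ≃ₜ Y) (h : e x0 = y0) : PHE x0 y0 := by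
  have h1 : (⟨e.symm, e.symm.continuous⟩ : C(Y, X)).comp (⟨e, e.continuous⟩ : C(X, Y)) =
      ContinuousMap.id X := by ext x; simp
  have h2 : (⟨e, e.continuous⟩ : C(X, Y)).comp (⟨e.symm, e.symm.continuous⟩ : C(Y, X)) =
      ContinuousMap.id Y := by ext x; simp
  refine ⟨⟨e, e.continuous⟩, ⟨e.symm, e.symm.continuous⟩, ?_, ?_, ?_, ?_⟩
  · intro x hx; apply e.injective; rw [h]; exact hx
  · intro x hx; apply e.symm.injective; rw [← h, e.symm_apply_apply]; exact hx
  · rw [h1]; exact ContinuousMap.HomotopicWith.refl _ (fun x hx => hx)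
  · rw [h2]; exact ContinuousMap.HomotopicWith.refl _ (fun x hx => hx)

lemma PHE.prod_left {W : Type} [TopologicalSpace W] (w0 : W) {x0 : X} {y0 : Y} (h : PHE x0 y0) :
    PHE (w0, x0) (w0, y0) := by
  obtain ⟨f, g, a, b, c, d⟩ := h
  refine ⟨(ContinuousMap.id W).prodMap f, (ContinuousMap.id W).prodMap g, ?_, ?_, ?_, ?_⟩
  · rintro ⟨w, x⟩ h
    have h := Prod.ext_iff.1 h
    exact Prod.ext h.1 (a _ h.2)
  · rintro ⟨w, x⟩ h
    have h := Prod.ext_iff.1 h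
    exact Prod.ext h.1 (b _ h.2)
  · obtain ⟨H, hc, h0, h1, hp⟩ := exHW c
    refine mkHW (fun p => (p.2.1, H (p.1, p.2.2))) (by fun_prop) ?_ ?_ ?_
    · intro x; simp [h0]; rfl
    · intro x; simp [h1]
    · rintro t ⟨w, x⟩ hx
      have h := Prod.ext_iff.1 hx
      exact Prod.ext h.1 (hp _ _ h.2)
  · obtain ⟨H, hc, h0, h1, hp⟩ := exHW d
    refine mkHW (fun p => (p.2.1, H (p.1, p.2.2))) (by fun_prop) ?_ ?_ ?_
    · intro x; simp [h0]; rfl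
    · intro x; simp [h1]
    · rintro t ⟨w, x⟩ hx
      have h := Prod.ext_iff.1 hx
      exact Prod.ext h.1 (hp _ _ h.2)

lemma PHE.pi (n : ℕ) {x0 : X} {y0 : Y} (h : PHE x0 y0) :
    PHE (fun _ : Fin n => x0) (fun _ : Fin n => y0) := by
  obtain ⟨f, g, a, b, c, d⟩ := h
  refine ⟨⟨fun x i => f (x i), by fun_prop⟩, ⟨fun x i => g (x i), by fun_prop⟩, ?_, ?_, ?_, ?_⟩
  · intro x h; funext i; exact a _ (congrFun h i)
  · intro x h; funext i; exact b _ (congrFun h i)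
  · obtain ⟨H, hc, h0, h1, hp⟩ := exHW c
    refine mkHW (fun p i => H (p.1, p.2 i)) (by fun_prop) ?_ ?_ ?_
    · intro x; funext i; simp [h0]
    · intro x; funext i; simp [h1]
    · intro t x hx; funext i; exact hp _ _ (congrFun hx i)
  · obtain ⟨H, hc, h0, h1, hp⟩ := exHW d
    refine mkHW (fun p i => H (p.1, p.2 i)) (by fun_prop) ?_ ?_ ?_
    · intro x; funext i; simp [h0]
    · intro x; funext i; simp [h1]
    · intro t x hx; funext i; exact hp _ _ (congrFun hx i)

lemma PHE.toHE {x0 : X} {y0 : Y} (h : PHE x0 y0) :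
    Nonempty (ContinuousMap.HomotopyEquiv {x : X // x ≠ x0} {y : Y // y ≠ y0}) := by
  obtain ⟨f, g, a, b, c, d⟩ := h
  refine ⟨⟨⟨fun x => ⟨f x.1, fun h => x.2 (a _ h)⟩, by fun_prop⟩,
    ⟨fun x => ⟨g x.1, fun h => x.2 (b _ h)⟩, by fun_prop⟩, ?_, ?_⟩⟩
  · obtain ⟨H, hc, h0, h1, hp⟩ := exHW c
    refine ⟨⟨⟨fun p => ⟨H (p.1, p.2.1), fun h => p.2.2 (hp _ _ h)⟩, by fun_prop⟩, ?_, ?_⟩⟩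
    · intro x; apply Subtype.ext; simp [h0]
    · intro x; apply Subtype.ext; simp [h1]
  · obtain ⟨H, hc, h0, h1, hp⟩ := exHW d
    refine ⟨⟨⟨fun p => ⟨H (p.1, p.2.1), fun h => p.2.2 (hp _ _ h)⟩, by fun_prop⟩, ?_, ?_⟩⟩
    · intro x; apply Subtype.ext; simp [h0]
    · intro x; apply Subtype.ext; simp [h1]

/-- radial retraction of a punctured cone to its link -/
lemma radial {E : Type} [AddCommGroup E] [Module ℝ E] [TopologicalSpace E] [ContinuousSMul ℝ E]
    (C : Set E) (hC : ∀ x ∈ C, ∀ t : ℝ, 0 < t → t • x ∈ C) (N : E → ℝ) (hN : Continuous N)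
    (hs : ∀ x, ∀ t : ℝ, 0 < t → N (t • x) = t * N x)
    (h0 : N 0 = 0) (hp : ∀ x ∈ C, x ≠ 0 → 0 < N x) :
    Nonempty (ContinuousMap.HomotopyEquiv {x : E // x ∈ C ∧ x ≠ 0} {x : E // x ∈ C ∧ N x = 1}) := by
  have key : ∀ (t : I) (x : {x : E // x ∈ C ∧ x ≠ 0}), 0 < (1 - (t : ℝ)) * (N x.1)⁻¹ + t := by
    intro t x
    have h1 := hp _ x.2.1 x.2.2
    have h2 : 0 < (N x.1)⁻¹ := inv_pos.2 h1
    rcases eq_or_lt_of_le t.2.1 with h | h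
    · rw [← h]; simpa using h2
    · have := mul_nonneg (sub_nonneg.2 t.2.2) h2.le
      linarith
  have hNc : Continuous fun x : {x : E // x ∈ C ∧ x ≠ 0} => (N x.1)⁻¹ :=
    (hN.comp continuous_subtype_val).inv₀ (fun x => (hp _ x.2.1 x.2.2).ne')
  refine ⟨⟨⟨fun x => ⟨(N x.1)⁻¹ • x.1, hC _ x.2.1 _ (inv_pos.2 (hp _ x.2.1 x.2.2)), ?_⟩,
    ?_⟩, ⟨fun x => ⟨x.1, x.2.1, ?_⟩, by fun_prop⟩, ?_, ?_⟩⟩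
  · rw [hs _ _ (inv_pos.2 (hp _ x.2.1 x.2.2)), inv_mul_cancel₀ (hp _ x.2.1 x.2.2).ne']
  · exact (hNc.smul continuous_subtype_val).subtype_mk _
  · intro h
    have := x.2.2
    rw [h, h0] at this
    exact zero_ne_one this
  · refine ⟨⟨⟨fun p => ⟨((1 - (p.1 : ℝ)) * (N p.2.1)⁻¹ + p.1) • p.2.1,
      hC _ p.2.2.1 _ (key _ _), smul_ne_zero (key _ _).ne' p.2.2.2⟩, ?_⟩, ?_, ?_⟩⟩
    · refine Continuous.subtype_mk (Continuous.smul ?_ (by fun_prop)) _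
      have := hNc.comp (continuous_snd (X := I))
      simp only [Function.comp_def] at this
      fun_prop
    · intro x; apply Subtype.ext; simp
    · intro x; apply Subtype.ext; simp
  · convert ContinuousMap.Homotopic.refl _
    apply ContinuousMap.ext; intro x; apply Subtype.ext
    simp [x.2.2]

end framework

open scoped unitInterval

/-- cone over the independence complex of the cycle with `l+1` vertices -/
def DCset (l : ℕ) : Set (ℕ → ℝ) :=
  {f | (∀ i, 0 ≤ f i) ∧ (∀ i, i < l → f i = 0 ∨ f (i+1) = 0) ∧ (f l = 0 ∨ f 0 = 0) ∧
    ∀ i, l < i → f i = 0}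

abbrev DC (l : ℕ) : Type := DCset l

lemma zero_mem_DC (l : ℕ) : (0 : ℕ → ℝ) ∈ DCset l := by simp [DCset]

@[fun_prop]
lemma DC_cont {T : Type} [TopologicalSpace T] {l : ℕ} {g : T → DC l} (hg : Continuous g) (i : ℕ) :
    Continuous fun t => (g t).1 i :=
  (continuous_apply i).comp (continuous_subtype_val.comp hg)

def dc0 (l : ℕ) : DC l := ⟨0, zero_mem_DC l⟩

def upd (l : ℕ) (f : ℕ → ℝ) (X Y A B C : ℝ) : ℕ → ℝ := fun i =>
  if i = 0 then Y else if i = l then X else if i = l+1 then A else if i = l+2 then B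
  else if i = l+3 then C else f i

lemma upd_cont {T : Type} [TopologicalSpace T] (l : ℕ) {f : T → ℕ → ℝ} {X Y A B C : T → ℝ}
    (hf : Continuous f) (hX : Continuous X) (hY : Continuous Y) (hA : Continuous A)
    (hB : Continuous B) (hC : Continuous C) :
    Continuous fun t => upd l (f t) (X t) (Y t) (A t) (B t) (C t) := by
  apply continuous_pi; intro i
  unfold upd
  split_ifs <;> fun_prop

lemma upd_mem {l : ℕ} (hl : 1 ≤ l) {f : ℕ → ℝ} (hf : f ∈ DCset (l+3)) {X Y A B C : ℝ}
    (hX : f l = 0 → X = 0) (hY : f 0 = 0 → Y = 0) (pX : 0 ≤ X) (pY : 0 ≤ Y) (pA : 0 ≤ A)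
    (pB : 0 ≤ B) (pC : 0 ≤ C) (xa : X = 0 ∨ A = 0) (ab : A = 0 ∨ B = 0) (bc : B = 0 ∨ C = 0)
    (cy : C = 0 ∨ Y = 0) : upd l f X Y A B C ∈ DCset (l+3) := by
  obtain ⟨h1, h2, h3, h4⟩ := hf
  refine ⟨?_, ?_, ?_, ?_⟩
  · intro i; have := h1 i; unfold upd; split_ifs <;> assumption
  · intro i hi; have := h2 i hi; unfold upd; grind
  · unfold upd; grind
  · intro i hi; have := h4 i hi; unfold upd; grind

lemma upd_self (l : ℕ) (f : ℕ → ℝ) :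
    upd l f (f l) (f 0) (f (l+1)) (f (l+2)) (f (l+3)) = f := by
  funext i; unfold upd; grind

lemma upd_zero {l : ℕ} (hl : 1 ≤ l) {f : ℕ → ℝ} {X Y A B C : ℝ} (h : upd l f X Y A B C = 0)
    (h' : X = 0 → Y = 0 → A = 0 → B = 0 → C = 0 →
      f l = 0 ∧ f 0 = 0 ∧ f (l+1) = 0 ∧ f (l+2) = 0 ∧ f (l+3) = 0) : f = 0 := by
  have e : ∀ i, upd l f X Y A B C i = 0 := fun i => congrFun h i
  have e0 := e 0
  have e1 := e l
  have e2 := e (l+1)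
  have e3 := e (l+2)
  have e4 := e (l+3)
  unfold upd at *
  simp at e0
  have := h' (by grind) e0 (by grind) (by grind) (by grind)
  funext i
  have := e i
  simp only [Pi.zero_apply]
  grind

/-- replace two coordinates and cut off -/
def cut (l : ℕ) (f : ℕ → ℝ) (X Y : ℝ) : ℕ → ℝ := fun i =>
  if i = 0 then Y else if i = l then X else if l < i then 0 else f i

lemma cut_cont {T : Type} [TopologicalSpace T] (l : ℕ) {f : T → ℕ → ℝ} {X Y : T → ℝ}
    (hf : Continuous f) (hX : Continuous X) (hY : Continuous Y) :
    Continuous fun t => cut l (f t) (X t) (Y t) := by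
  apply continuous_pi; intro i
  unfold cut
  split_ifs <;> fun_prop

lemma cut_mem {l : ℕ} (hl : 1 ≤ l) {f : ℕ → ℝ} (h1 : ∀ i, 0 ≤ f i)
    (h2 : ∀ i, i < l → f i = 0 ∨ f (i+1) = 0) {X Y : ℝ}
    (hX : f l = 0 → X = 0) (hY : f 0 = 0 → Y = 0) (pX : 0 ≤ X) (pY : 0 ≤ Y)
    (xy : X = 0 ∨ Y = 0) : cut l f X Y ∈ DCset l := by
  refine ⟨?_, ?_, ?_, ?_⟩
  · intro i; have := h1 i; unfold cut; split_ifs <;> first | assumption | exact le_rfl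
  · intro i hi; have := h2 i hi; unfold cut; grind
  · unfold cut; grind
  · intro i hi; unfold cut; grind

/-- extending from `DC l` to `DC (l+3)` -/
lemma upd_mem' {l : ℕ} (hl : 1 ≤ l) {f : ℕ → ℝ} (hf : f ∈ DCset l) {X Y A B C : ℝ}
    (hX : f l = 0 → X = 0) (hY : f 0 = 0 → Y = 0) (pX : 0 ≤ X) (pY : 0 ≤ Y) (pA : 0 ≤ A)
    (pB : 0 ≤ B) (pC : 0 ≤ C) (xa : X = 0 ∨ A = 0) (ab : A = 0 ∨ B = 0) (bc : B = 0 ∨ C = 0)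
    (cy : C = 0 ∨ Y = 0) : upd l f X Y A B C ∈ DCset (l+3) := by
  refine upd_mem hl ?_ hX hY pX pY pA pB pC xa ab bc cy
  obtain ⟨h1, h2, h3, h4⟩ := hf
  refine ⟨h1, ?_, ?_, ?_⟩
  · intro i hi
    by_cases h : i < l
    · exact h2 i h
    · right; exact h4 _ (by omega)
  · left; exact h4 _ (by omega)
  · intro i hi; exact h4 _ (by omega)

def stepF (l : ℕ) (hl : 1 ≤ l) : C(DC (l+3), ℝ × DC l) where
  toFun f := (f.1 (l+2) + min (f.1 l) (f.1 0) - (f.1 (l+1) + f.1 (l+3)),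
    ⟨cut l f.1 (f.1 l - min (f.1 l) (f.1 0)) (f.1 0 - min (f.1 l) (f.1 0)), by
      have p1 := f.2.1 l
      have p0 := f.2.1 0
      apply cut_mem hl f.2.1 (fun i hi => f.2.2.1 i (by omega)) <;> grind⟩)
  continuous_toFun := by
    refine Continuous.prodMk (by fun_prop) (Continuous.subtype_mk (cut_cont l ?_ ?_ ?_) _)
    all_goals fun_prop

def stepG (l : ℕ) (hl : 1 ≤ l) : C(ℝ × DC l, DC (l+3)) where
  toFun p := ⟨upd l p.2.1 (p.2.1 l - min (p.2.1 l) (max (-p.1) 0))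
      (p.2.1 0 - min (p.2.1 0) (max (-p.1) 0))
      ((max (-p.1) 0 - min (p.2.1 l) (max (-p.1) 0) + min (p.2.1 0) (max (-p.1) 0)) / 2)
      (max p.1 0)
      ((max (-p.1) 0 + min (p.2.1 l) (max (-p.1) 0) - min (p.2.1 0) (max (-p.1) 0)) / 2), by
      have p1 := p.2.2.1 l
      have p0 := p.2.2.1 0
      have p3 := p.2.2.2.2.1
      apply upd_mem' hl p.2.2 <;> grind⟩
  continuous_toFun := by
    refine Continuous.subtype_mk (upd_cont l ?_ ?_ ?_ ?_ ?_ ?_) _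
    all_goals fun_prop


def S1 (l : ℕ) (hl : 1 ≤ l) : C(I × DC (l+3), DC (l+3)) where
  toFun p := ⟨upd l p.2.1 (p.2.1 l - (1 - p.1) * min (p.2.1 l) (p.2.1 0))
      (p.2.1 0 - (1 - p.1) * min (p.2.1 l) (p.2.1 0))
      (p.2.1 (l+1)) (p.2.1 (l+2) + (1 - p.1) * min (p.2.1 l) (p.2.1 0)) (p.2.1 (l+3)), by
      have u0 := p.1.2.1
      have u1 := p.1.2.2
      have px := p.2.2.1 l
      have py := p.2.2.1 0
      have pa := p.2.2.1 (l+1)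
      have pb := p.2.2.1 (l+2)
      have pc := p.2.2.1 (l+3)
      have xa := p.2.2.2.1 l (by omega)
      have ab := p.2.2.2.1 (l+1) (by omega)
      have bc := p.2.2.2.1 (l+2) (by omega)
      have cy := p.2.2.2.2.1
      have q0 : 0 ≤ min (p.2.1 l) (p.2.1 0) := le_min px py
      have q1 : (1 - (p.1 : ℝ)) * min (p.2.1 l) (p.2.1 0) ≤ min (p.2.1 l) (p.2.1 0) := by
        nlinarith
      have q2 : 0 ≤ (1 - (p.1 : ℝ)) * min (p.2.1 l) (p.2.1 0) :=
        mul_nonneg (by linarith) q0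
      generalize (1 - (p.1 : ℝ)) * min (p.2.1 l) (p.2.1 0) = r at *
      apply upd_mem hl p.2.2 <;> grind⟩
  continuous_toFun := by
    refine Continuous.subtype_mk (upd_cont l ?_ ?_ ?_ ?_ ?_ ?_) _
    all_goals fun_prop

def S2 (l : ℕ) (hl : 1 ≤ l) : C(I × DC (l+3), DC (l+3)) where
  toFun p := ⟨upd l p.2.1
      (p.2.1 l - min (p.2.1 l) (p.2.1 0) - min (p.2.1 l - min (p.2.1 l) (p.2.1 0))
        ((1 - p.1) * (p.2.1 (l+1) + p.2.1 (l+3))))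
      (p.2.1 0 - min (p.2.1 l) (p.2.1 0) - min (p.2.1 0 - min (p.2.1 l) (p.2.1 0))
        ((1 - p.1) * (p.2.1 (l+1) + p.2.1 (l+3))))
      (p.2.1 (l+1)) (p.2.1 (l+2) + min (p.2.1 l) (p.2.1 0)) (p.2.1 (l+3)), by
      have u0 := p.1.2.1
      have u1 := p.1.2.2
      have px := p.2.2.1 l
      have py := p.2.2.1 0
      have pa := p.2.2.1 (l+1)
      have pb := p.2.2.1 (l+2)
      have pc := p.2.2.1 (l+3)
      have xa := p.2.2.2.1 l (by omega)
      have ab := p.2.2.2.1 (l+1) (by omega)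
      have bc := p.2.2.2.1 (l+2) (by omega)
      have cy := p.2.2.2.2.1
      have q2 : 0 ≤ (1 - (p.1 : ℝ)) * (p.2.1 (l+1) + p.2.1 (l+3)) :=
        mul_nonneg (by linarith) (by linarith)
      generalize (1 - (p.1 : ℝ)) * (p.2.1 (l+1) + p.2.1 (l+3)) = r at *
      apply upd_mem hl p.2.2 <;> grind⟩
  continuous_toFun := by
    refine Continuous.subtype_mk (upd_cont l ?_ ?_ ?_ ?_ ?_ ?_) _
    all_goals fun_prop

/-- the new values of the outer coordinates -/
def nA (x y s : ℝ) : ℝ := (s - min (x - min x y) s + min (y - min x y) s) / 2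

lemma nA_cont {T : Type} [TopologicalSpace T] {x y s : T → ℝ} (hx : Continuous x)
    (hy : Continuous y) (hs : Continuous s) : Continuous fun t => nA (x t) (y t) (s t) := by
  unfold nA; fun_prop

lemma nA_nonneg {x y s : ℝ} (hx : 0 ≤ x) (hy : 0 ≤ y) (hs : 0 ≤ s) : 0 ≤ nA x y s := by
  unfold nA; grind

lemma nA_sum {x y s : ℝ} : nA x y s + nA y x s = s := by
  unfold nA; rw [min_comm y x]; ring

lemma nA_zero {x y s : ℝ} (hx : 0 ≤ x) (hy : 0 ≤ y) (hs : 0 ≤ s)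
    (h : s < x - min x y) : nA x y s = 0 := by
  unfold nA; grind

def S3 (l : ℕ) (hl : 1 ≤ l) : C(I × DC (l+3), DC (l+3)) where
  toFun p := ⟨upd l p.2.1
      (p.2.1 l - min (p.2.1 l) (p.2.1 0) - min (p.2.1 l - min (p.2.1 l) (p.2.1 0))
        (p.2.1 (l+1) + p.2.1 (l+3)))
      (p.2.1 0 - min (p.2.1 l) (p.2.1 0) - min (p.2.1 0 - min (p.2.1 l) (p.2.1 0))
        (p.2.1 (l+1) + p.2.1 (l+3)))
      (p.1 * p.2.1 (l+1) + (1 - p.1) * nA (p.2.1 l) (p.2.1 0) (p.2.1 (l+1) + p.2.1 (l+3)))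
      (p.2.1 (l+2) + min (p.2.1 l) (p.2.1 0))
      (p.1 * p.2.1 (l+3) + (1 - p.1) * nA (p.2.1 0) (p.2.1 l) (p.2.1 (l+1) + p.2.1 (l+3))), by
      have u0 := p.1.2.1
      have u1 := p.1.2.2
      have px := p.2.2.1 l
      have py := p.2.2.1 0
      have pa := p.2.2.1 (l+1)
      have pb := p.2.2.1 (l+2)
      have pc := p.2.2.1 (l+3)
      have xa := p.2.2.2.1 l (by omega)
      have ab := p.2.2.2.1 (l+1) (by omega)
      have bc := p.2.2.2.1 (l+2) (by omega)
      have cy := p.2.2.2.2.1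
      have n1 := nA_nonneg px py (add_nonneg pa pc)
      have n2 := nA_nonneg py px (add_nonneg pa pc)
      have n3 := nA_zero px py (add_nonneg pa pc)
      have n4 := nA_zero py px (add_nonneg pa pc)
      have n5 := @nA_sum (p.2.1 l) (p.2.1 0) (p.2.1 (l+1) + p.2.1 (l+3))
      have v1 : 0 ≤ 1 - (p.1 : ℝ) := by linarith
      have A0 := add_nonneg (mul_nonneg u0 pa) (mul_nonneg v1 n1)
      have C0 := add_nonneg (mul_nonneg u0 pc) (mul_nonneg v1 n2)
      have A1 : p.2.1 (l+1) = 0 → nA (p.2.1 l) (p.2.1 0) (p.2.1 (l+1) + p.2.1 (l+3)) = 0 →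
        p.1 * p.2.1 (l+1) + (1 - p.1) * nA (p.2.1 l) (p.2.1 0) (p.2.1 (l+1) + p.2.1 (l+3)) = 0 := by
        intro h h'; rw [h', h]; ring
      have C1 : p.2.1 (l+3) = 0 → nA (p.2.1 0) (p.2.1 l) (p.2.1 (l+1) + p.2.1 (l+3)) = 0 →
        p.1 * p.2.1 (l+3) + (1 - p.1) * nA (p.2.1 0) (p.2.1 l) (p.2.1 (l+1) + p.2.1 (l+3)) = 0 := by
        intro h h'; rw [h', h]; ring
      generalize p.1 * p.2.1 (l+1) + (1 - p.1) * nA (p.2.1 l) (p.2.1 0)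
        (p.2.1 (l+1) + p.2.1 (l+3)) = A at *
      generalize p.1 * p.2.1 (l+3) + (1 - p.1) * nA (p.2.1 0) (p.2.1 l)
        (p.2.1 (l+1) + p.2.1 (l+3)) = C at *
      apply upd_mem hl p.2.2 <;> grind⟩
  continuous_toFun := by
    refine Continuous.subtype_mk (upd_cont l ?_ ?_ ?_ ?_ ?_ ?_) _
    · fun_prop
    · fun_prop
    · fun_prop
    · refine Continuous.add (by fun_prop) (Continuous.mul (by fun_prop) (nA_cont ?_ ?_ ?_)) <;>
        fun_prop
    · fun_prop
    · refine Continuous.add (by fun_prop) (Continuous.mul (by fun_prop) (nA_cont ?_ ?_ ?_)) <;>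
        fun_prop

lemma step_GF (l : ℕ) (hl : 1 ≤ l) (f : DC (l+3)) :
    S3 l hl (0, f) = (stepG l hl) (stepF l hl f) := by
  apply Subtype.ext
  have px := f.2.1 l
  have py := f.2.1 0
  have pa := f.2.1 (l+1)
  have pb := f.2.1 (l+2)
  have pc := f.2.1 (l+3)
  have xa := f.2.2.1 l (by omega)
  have ab := f.2.2.1 (l+1) (by omega)
  have bc := f.2.2.1 (l+2) (by omega)
  have cy := f.2.2.2.1
  have e1 : max (-(f.1 (l+2) + min (f.1 l) (f.1 0) - (f.1 (l+1) + f.1 (l+3)))) 0 =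
    f.1 (l+1) + f.1 (l+3) := by grind
  have e2 : max ((f.1 (l+2) + min (f.1 l) (f.1 0) - (f.1 (l+1) + f.1 (l+3)))) 0 =
    f.1 (l+2) + min (f.1 l) (f.1 0) := by grind
  have c0 : ∀ X Y : ℝ, cut l f.1 X Y 0 = Y := by intro X Y; simp [cut]
  have c1 : ∀ X Y : ℝ, cut l f.1 X Y l = X := by intro X Y; unfold cut; grind
  simp only [S3, stepG, stepF, ContinuousMap.coe_mk, e1, e2, c0, c1, nA]
  funext i
  have := f.2.2.2.2 i
  unfold upd cut
  simp only [Set.Icc.coe_zero, zero_mul, sub_zero, one_mul, zero_add, min_comm (f.1 0) (f.1 l)]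
  grind

lemma step (l : ℕ) (hl : 1 ≤ l) : PHE (dc0 (l+3)) ((0 : ℝ), dc0 l) := by
  refine ⟨stepF l hl, stepG l hl, ?_, ?_, ?_, ?_⟩
  · intro f hf
    have h1 := congrArg Prod.fst hf
    have h2 := fun i => congrFun (congrArg (fun p => p.2.1) hf) i
    simp only [stepF, ContinuousMap.coe_mk, dc0, Pi.zero_apply] at h1 h2
    have px := f.2.1 l
    have py := f.2.1 0
    have pa := f.2.1 (l+1)
    have pb := f.2.1 (l+2)
    have pc := f.2.1 (l+3)
    have xa := f.2.2.1 l (by omega)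
    have ab := f.2.2.1 (l+1) (by omega)
    have bc := f.2.2.1 (l+2) (by omega)
    have cy := f.2.2.2.1
    have h20 := h2 0
    have h2l := h2 l
    unfold cut at *
    apply Subtype.ext; funext i
    have h2i := h2 i
    have := f.2.2.2.2 i
    simp only [dc0, Pi.zero_apply]
    grind
  · rintro ⟨t, f⟩ h
    have h := congrArg Subtype.val h
    simp only [stepG, ContinuousMap.coe_mk, dc0] at h
    have px := f.2.1 l
    have py := f.2.1 0
    have f1 := f.2.2.2.2 (l+1) (by omega)
    have f2 := f.2.2.2.2 (l+2) (by omega)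
    have f3 := f.2.2.2.2 (l+3) (by omega)
    have ht : t = 0 := by
      have e2 := congrFun h (l+1)
      have e3 := congrFun h (l+2)
      have e4 := congrFun h (l+3)
      unfold upd at e2 e3 e4
      simp only [Pi.zero_apply] at e2 e3 e4
      grind
    have : f.1 = 0 := upd_zero hl h (by grind)
    exact Prod.ext ht (Subtype.ext this)
  · refine ContinuousMap.HomotopicWith.trans (g := ⟨fun x => S3 l hl (1, x), by fun_prop⟩)
      (mkHW (S3 l hl) (S3 l hl).continuous (step_GF l hl) (fun x => rfl) ?_) ?_
    · intro t f h
      have h := congrArg Subtype.val h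
      simp only [S3, ContinuousMap.coe_mk, dc0] at h
      have u0 := t.2.1
      have u1 := t.2.2
      have v1 : 0 ≤ 1 - (t : ℝ) := by linarith
      have px := f.2.1 l
      have py := f.2.1 0
      have pa := f.2.1 (l+1)
      have pb := f.2.1 (l+2)
      have pc := f.2.1 (l+3)
      have xa := f.2.2.1 l (by omega)
      have ab := f.2.2.1 (l+1) (by omega)
      have bc := f.2.2.1 (l+2) (by omega)
      have cy := f.2.2.2.1

      refine Subtype.ext (upd_zero hl h ?_)
      intro h1 h2 h3 h4 h5
      have n5 := @nA_sum (f.1 l) (f.1 0) (f.1 (l+1) + f.1 (l+3))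
      have hs : f.1 (l+1) + f.1 (l+3) = 0 := by
        linear_combination h3 + h5 + (t - 1 : ℝ) * n5
      grind
    · refine ContinuousMap.HomotopicWith.trans (g := ⟨fun x => S2 l hl (1, x), by fun_prop⟩)
        (mkHW (S2 l hl) (S2 l hl).continuous ?_ (fun x => rfl) ?_)
        (mkHW (S1 l hl) (S1 l hl).continuous ?_ ?_ ?_)
      · intro f
        apply Subtype.ext
        simp [S2, S3]
      · intro t f h
        have h := congrArg Subtype.val h
        simp only [S2, ContinuousMap.coe_mk, dc0] at h
        have u0 := t.2.1
        have u1 := t.2.2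
        have v1 : 0 ≤ 1 - (t : ℝ) := by linarith
        have px := f.2.1 l
        have py := f.2.1 0
        have pa := f.2.1 (l+1)
        have pb := f.2.1 (l+2)
        have pc := f.2.1 (l+3)
        have xa := f.2.2.1 l (by omega)
        have ab := f.2.2.1 (l+1) (by omega)
        have bc := f.2.2.1 (l+2) (by omega)
        have cy := f.2.2.2.1

        refine Subtype.ext (upd_zero hl h ?_)
        intro h1 h2 h3 h4 h5
        rw [h3, h5] at h1 h2
        simp only [add_zero, mul_zero] at h1 h2
        grind
      · intro f
        have px := f.2.1 l
        have py := f.2.1 0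
        apply Subtype.ext
        have e1 : min (f.1 l - min (f.1 l) (f.1 0)) 0 = 0 := by grind
        have e2 : min (f.1 0 - min (f.1 l) (f.1 0)) 0 = 0 := by grind
        simp only [S1, S2, ContinuousMap.coe_mk, Set.Icc.coe_zero, Set.Icc.coe_one, sub_self,
          zero_mul, sub_zero, one_mul, e1, e2]
      · intro f
        apply Subtype.ext
        simp [S1, upd_self]
      · intro t f h
        have h := congrArg Subtype.val h
        simp only [S1, ContinuousMap.coe_mk, dc0] at h
        have u0 := t.2.1
        have u1 := t.2.2
        have v1 : 0 ≤ 1 - (t : ℝ) := by linarith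
        have px := f.2.1 l
        have py := f.2.1 0
        have pa := f.2.1 (l+1)
        have pb := f.2.1 (l+2)
        have pc := f.2.1 (l+3)
        have xa := f.2.2.1 l (by omega)
        have ab := f.2.2.1 (l+1) (by omega)
        have bc := f.2.2.1 (l+2) (by omega)
        have cy := f.2.2.2.1

        refine Subtype.ext (upd_zero hl h ?_)
        intro h1 h2 h3 h4 h5
        have : 0 ≤ (1 - (t : ℝ)) * min (f.1 l) (f.1 0) := mul_nonneg v1 (le_min px py)
        grind
  · refine mkHW (fun p => (p.2.1, ⟨cut l p.2.2.1
      (p.2.2.1 l - min (p.2.2.1 l) ((1 - p.1) * (max (-p.2.1) 0)))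
      (p.2.2.1 0 - min (p.2.2.1 0) ((1 - p.1) * (max (-p.2.1) 0))), ?_⟩)) ?_ ?_ ?_ ?_
    · have px := p.2.2.2.1 l
      have py := p.2.2.2.1 0
      have xy := p.2.2.2.2.2.1
      have h : 0 ≤ (1 - (p.1 : ℝ)) * (max (-p.2.1) 0) :=
        mul_nonneg (sub_nonneg.2 p.1.2.2) (le_max_right _ _)
      apply cut_mem hl p.2.2.2.1 p.2.2.2.2.1 <;> grind
    · refine Continuous.prodMk (by fun_prop) (Continuous.subtype_mk (cut_cont l ?_ ?_ ?_) _)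
      all_goals fun_prop
    · rintro ⟨t, f⟩
      have px := f.2.1 l
      have py := f.2.1 0
      have xy := f.2.2.2.1
      have u0 : ∀ X Y A B C : ℝ, upd l f.1 X Y A B C 0 = Y := by intros; simp [upd]
      have u1 : ∀ X Y A B C : ℝ, upd l f.1 X Y A B C l = X := by intros; unfold upd; grind
      have u2 : ∀ X Y A B C : ℝ, upd l f.1 X Y A B C (l+1) = A := by intros; unfold upd; grind
      have u3 : ∀ X Y A B C : ℝ, upd l f.1 X Y A B C (l+2) = B := by intros; unfold upd; grind
      have u4 : ∀ X Y A B C : ℝ, upd l f.1 X Y A B C (l+3) = C := by intros; unfold upd; grind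
      have e : min (f.1 l - min (f.1 l) (max (-t) 0)) (f.1 0 - min (f.1 0) (max (-t) 0)) = 0 := by
        grind
      simp only [stepF, stepG, ContinuousMap.comp_apply, ContinuousMap.coe_mk, u0, u1, u2, u3, u4,
        e, Set.Icc.coe_zero, sub_zero, one_mul]
      refine Prod.ext ?_ (Subtype.ext ?_)
      · simp only; grind
      · funext i
        simp only [cut, upd]
        grind
    · rintro ⟨t, f⟩
      have px := f.2.1 l
      have py := f.2.1 0
      refine Prod.ext rfl (Subtype.ext ?_)
      funext i
      have := f.2.2.2.2 i
      simp only [cut, Set.Icc.coe_one, sub_self, zero_mul, ContinuousMap.id_apply]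
      grind
    · rintro u ⟨t, f⟩ h
      have px := f.2.1 l
      have py := f.2.1 0
      have h1 := congrArg Prod.fst h
      have h2 := fun i => congrFun (congrArg (fun p => p.2.1) h) i
      simp only [dc0, Pi.zero_apply] at h1 h2
      subst h1
      refine Prod.ext rfl (Subtype.ext ?_)
      funext i
      have h2i := h2 i
      have := f.2.2.2.2 i
      simp only [neg_zero, max_self, mul_zero, cut] at h2i
      simp only [dc0, Pi.zero_apply]
      grind

open scoped unitInterval

lemma iter {Y : Type} [TopologicalSpace Y] {y0 : Y} {l : ℕ} (hl : 1 ≤ l) (h : PHE (dc0 l) y0)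
    (j : ℕ) : PHE (dc0 (l + 3 * j)) ((0 : Fin j → ℝ), y0) := by
  induction j with
  | zero =>
    refine h.trans (PHE.ofHomeo
      { toFun := fun y => (0, y), invFun := fun p => p.2, left_inv := fun y => rfl,
        right_inv := fun p => Prod.ext (Subsingleton.elim _ _) rfl } rfl)
  | succ j ih =>
    refine (step (l + 3 * j) (by omega)).trans ((PHE.prod_left (0 : ℝ) ih).trans
      (PHE.ofHomeo
        { toFun := fun p => (Fin.cons p.1 p.2.1, p.2.2)
          invFun := fun p => (p.1 0, fun i => p.1 i.succ, p.2)
          left_inv := fun p => by simp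
          right_inv := fun p => by
            refine Prod.ext ?_ rfl
            funext i; refine Fin.cases ?_ (fun i => ?_) i <;> simp
          continuous_toFun := ?_
          continuous_invFun := ?_ } ?_))
    · refine Continuous.prodMk (continuous_pi fun i => ?_) (by fun_prop)
      refine Fin.cases ?_ (fun i => ?_) i <;> simp <;> fun_prop
    · fun_prop
    · refine Prod.ext ?_ rfl
      funext i; refine Fin.cases ?_ (fun i => ?_) i <;> simp

def ofVals (a b c d : ℝ) : ℕ → ℝ := fun i =>
  if i = 0 then a else if i = 1 then b else if i = 2 then c else if i = 3 then d else 0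

lemma ofVals_cont {T : Type} [TopologicalSpace T] {A B C D : T → ℝ}
    (hA : Continuous A) (hB : Continuous B) (hC : Continuous C) (hD : Continuous D) :
    Continuous fun t => ofVals (A t) (B t) (C t) (D t) := by
  apply continuous_pi; intro i
  unfold ofVals
  split_ifs <;> fun_prop

lemma ofVals_self {l : ℕ} (hl : l ≤ 3) {f : ℕ → ℝ} (hf : f ∈ DCset l) :
    ofVals (f 0) (f 1) (f 2) (f 3) = f := by
  funext i; have := hf.2.2.2 i; unfold ofVals; grind

lemma base1 : PHE (dc0 1) (0 : ℝ) := by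
  refine PHE.ofHomeo
    { toFun := fun f => f.1 0 - f.1 1
      invFun := fun t => ⟨ofVals (max t 0) (max (-t) 0) 0 0, ?_⟩
      left_inv := ?_
      right_inv := ?_
      continuous_toFun := by fun_prop
      continuous_invFun := ?_ } ?_
  · refine ⟨?_, ?_, ?_, ?_⟩
    · intro i; unfold ofVals; grind
    · intro i hi; unfold ofVals; grind
    · unfold ofVals; grind
    · intro i hi; unfold ofVals; grind
  · intro f
    have p0 := f.2.1 0
    have p1 := f.2.1 1
    have q := f.2.2.2.1
    have c2 := f.2.2.2.2 2 (by omega)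
    have c3 := f.2.2.2.2 3 (by omega)
    apply Subtype.ext
    rw [← ofVals_self (by omega) f.2, c2, c3]
    simp only [ofVals]
    funext i
    grind
  · intro t; simp [ofVals]
  · exact Continuous.subtype_mk (ofVals_cont (by fun_prop) (by fun_prop) (by fun_prop)
      (by fun_prop)) _
  · simp [dc0]

lemma mem3 {a b c d : ℝ} (ha : 0 ≤ a) (hb : 0 ≤ b) (hc : 0 ≤ c) (hd : 0 ≤ d)
    (h1 : a = 0 ∨ b = 0) (h2 : b = 0 ∨ c = 0) (h3 : c = 0 ∨ d = 0) (h4 : d = 0 ∨ a = 0) :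
    ofVals a b c d ∈ DCset 3 := by
  refine ⟨?_, ?_, ?_, ?_⟩
  · intro i; unfold ofVals; grind
  · intro i hi; interval_cases i <;> simp [ofVals] <;> assumption
  · simpa [ofVals] using h4
  · intro i hi; unfold ofVals; grind

def b3G : C(ℝ, DC 3) where
  toFun t := ⟨ofVals (max t 0) (max (-t) 0) 0 0, by apply mem3 <;> grind⟩
  continuous_toFun := by
    apply Continuous.subtype_mk
    exact ofVals_cont (by fun_prop) (by fun_prop) (by fun_prop) (by fun_prop)

def b3H : C(I × DC 3, DC 3) where
  toFun p := ⟨ofVals (p.2.1 0 + (1 - p.1) * p.2.1 2) (p.2.1 1 + (1 - p.1) * p.2.1 3)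
      (p.1 * p.2.1 2) (p.1 * p.2.1 3), by
      have u0 := p.1.2.1
      have v1 : 0 ≤ 1 - (p.1 : ℝ) := sub_nonneg.2 p.1.2.2
      have p0 := p.2.2.1 0
      have p1 := p.2.2.1 1
      have p2 := p.2.2.1 2
      have p3 := p.2.2.1 3
      have q0 := p.2.2.2.1 0 (by omega)
      have q1 := p.2.2.2.1 1 (by omega)
      have q2 := p.2.2.2.1 2 (by omega)
      have q3 := p.2.2.2.2.1
      have w1 : p.2.1 2 = 0 → p.1 * p.2.1 2 = 0 := by intro h; rw [h]; ring
      have w2 : p.2.1 3 = 0 → p.1 * p.2.1 3 = 0 := by intro h; rw [h]; ring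
      have w3 : p.2.1 2 = 0 → (1 - p.1) * p.2.1 2 = 0 := by intro h; rw [h]; ring
      have w4 : p.2.1 3 = 0 → (1 - p.1) * p.2.1 3 = 0 := by intro h; rw [h]; ring
      have z1 := mul_nonneg u0 p2
      have z2 := mul_nonneg u0 p3
      have z3 := mul_nonneg v1 p2
      have z4 := mul_nonneg v1 p3
      have : (p.2.1 0 = 0 ∧ p.2.1 2 = 0) ∨ (p.2.1 1 = 0 ∧ p.2.1 3 = 0) := by grind
      apply mem3 <;> rcases this with ⟨h, h'⟩ | ⟨h, h'⟩ <;>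
        first | linarith | simp [h, h']
      ⟩
  continuous_toFun := by
    apply Continuous.subtype_mk
    exact ofVals_cont (by fun_prop) (by fun_prop) (by fun_prop) (by fun_prop)

lemma base3 : PHE (dc0 3) (0 : ℝ) := by
  refine ⟨⟨fun f => f.1 0 + f.1 2 - (f.1 1 + f.1 3), by fun_prop⟩,
    b3G, ?_, ?_, ?_, ?_⟩
  · intro f h
    have p0 := f.2.1 0
    have p1 := f.2.1 1
    have p2 := f.2.1 2
    have p3 := f.2.1 3
    have q0 := f.2.2.1 0 (by omega)
    have q1 := f.2.2.1 1 (by omega)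
    have q2 := f.2.2.1 2 (by omega)
    have q3 := f.2.2.2.1
    simp only [ContinuousMap.coe_mk] at h
    apply Subtype.ext
    rw [← ofVals_self (by omega) f.2]
    funext i
    simp only [dc0, ofVals, Pi.zero_apply]
    grind
  · intro t h
    have h := congrArg Subtype.val h
    have e0 := congrFun h 0
    have e1 := congrFun h 1
    simp [b3G, ofVals, dc0] at e0 e1
    linarith
  · refine mkHW b3H b3H.continuous ?_ ?_ ?_
    · intro f
      have p0 := f.2.1 0
      have p1 := f.2.1 1
      have p2 := f.2.1 2
      have p3 := f.2.1 3
      have q0 := f.2.2.1 0 (by omega)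
      have q1 := f.2.2.1 1 (by omega)
      have q2 := f.2.2.1 2 (by omega)
      have q3 := f.2.2.2.1
      apply Subtype.ext
      funext i
      simp only [b3G, b3H, ContinuousMap.comp_apply, ContinuousMap.coe_mk, ofVals, Set.Icc.coe_zero,
        sub_zero, one_mul, zero_mul]
      grind
    · intro f
      apply Subtype.ext
      simp [b3H, ofVals_self (by omega) f.2]
    · intro t f h
      have v1 : 0 ≤ 1 - (t : ℝ) := sub_nonneg.2 t.2.2
      have p0 := f.2.1 0
      have p1 := f.2.1 1
      have p2 := f.2.1 2
      have p3 := f.2.1 3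
      have z3 := mul_nonneg v1 p2
      have z4 := mul_nonneg v1 p3
      have h := congrArg Subtype.val h
      have e0 := congrFun h 0
      have e1 := congrFun h 1
      have e2 := congrFun h 2
      have e3 := congrFun h 3
      simp [b3H, ofVals, dc0, -mul_eq_zero] at e0 e1 e2 e3
      apply Subtype.ext
      rw [← ofVals_self (by omega) f.2]
      have w2 : f.1 2 = 0 := by linarith
      have w3 : f.1 3 = 0 := by linarith
      funext i
      simp only [dc0, ofVals, Pi.zero_apply]
      grind
  · have : (⟨fun f => f.1 0 + f.1 2 - (f.1 1 + f.1 3), by fun_prop⟩ : C(DC 3, ℝ)).comp b3G =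
        ContinuousMap.id ℝ := by
      ext t; simp [b3G, ofVals]
    rw [this]; exact ContinuousMap.HomotopicWith.refl _ (fun t h => h)

/-- the tripod -/
def TS : Set (ℝ × ℝ) := {p | |p.2| = max p.1 0}

def ts0 : TS := ⟨(0, 0), by simp [TS]⟩

lemma base2 : PHE (dc0 2) ts0 := by
  refine PHE.ofHomeo
    { toFun := fun f => ⟨(f.1 1 + f.1 2 - f.1 0, f.1 1 - f.1 2), ?_⟩
      invFun := fun t => ⟨ofVals (max (-t.1.1) 0) (max t.1.2 0) (max (-t.1.2) 0) 0, ?_⟩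
      left_inv := ?_
      right_inv := ?_
      continuous_toFun := ?_
      continuous_invFun := ?_ } ?_
  · have p0 := f.2.1 0
    have p1 := f.2.1 1
    have p2 := f.2.1 2
    have q0 := f.2.2.1 0 (by omega)
    have q1 := f.2.2.1 1 (by omega)
    have q3 := f.2.2.2.1
    simp only [TS, Set.mem_ofPred_eq]
    grind
  · have := t.2
    simp only [TS, Set.mem_ofPred_eq] at this
    refine ⟨?_, ?_, ?_, ?_⟩
    · intro i; unfold ofVals; grind
    · intro i hi; interval_cases i <;> simp [ofVals] <;> grind
    · simp [ofVals]; grind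
    · intro i hi; unfold ofVals; grind
  · intro f
    have p0 := f.2.1 0
    have p1 := f.2.1 1
    have p2 := f.2.1 2
    have q0 := f.2.2.1 0 (by omega)
    have q1 := f.2.2.1 1 (by omega)
    have q3 := f.2.2.2.1
    have c3 := f.2.2.2.2 3 (by omega)
    apply Subtype.ext
    refine Eq.trans ?_ (ofVals_self (by omega) f.2)
    rw [c3]
    simp only [ofVals]
    funext i
    grind
  · intro t
    have := t.2
    simp only [TS, Set.mem_ofPred_eq] at this
    apply Subtype.ext
    apply Prod.ext <;> simp [ofVals] <;> grind
  · exact Continuous.subtype_mk (by fun_prop) _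
  · exact Continuous.subtype_mk (ofVals_cont (by fun_prop) (by fun_prop)
        (by fun_prop) (by fun_prop)) _
  · simp [dc0, ts0]

/-- the cone over `Hom₊` -/
def HPC (l n : ℕ) : Set (ZMod (l+1) → Fin n → ℝ) :=
  {f | (∀ v w, 0 ≤ f v w) ∧ ∀ x a, f x a = 0 ∨ f (x+1) a = 0}

lemma homPlus_cone (l n : ℕ) : Nonempty (ContinuousMap.HomotopyEquiv
    (HomPlus (cycleGraph (l+1)) (completeGraph n))
    {x : Fin n → DC l // x ≠ fun _ => dc0 l}) := by
  obtain ⟨e⟩ := radial (HPC l n) (by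
      rintro x ⟨h1, h2⟩ t ht
      refine ⟨fun v w => mul_nonneg ht.le (h1 v w), fun v a => ?_⟩
      rcases h2 v a with h | h
      · left; simp [h]
      · right; simp [h])
    (fun f => ∑ v, ∑ w, f v w) (by fun_prop) (by
      intro x t ht
      simp [Finset.mul_sum]) (by simp) (by
      rintro x ⟨h1, h2⟩ hx
      by_contra h
      apply hx
      have h3 : 0 ≤ ∑ v, ∑ w, x v w := Finset.sum_nonneg fun v _ => Finset.sum_nonneg fun w _ => h1 v w
      have h4 : ∑ v, ∑ w, x v w = 0 := by linarith
      rw [Finset.sum_eq_zero_iff_of_nonneg (fun v _ => Finset.sum_nonneg fun w _ => h1 v w)] at h4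
      funext v w
      have h5 := h4 v (Finset.mem_univ _)
      rw [Finset.sum_eq_zero_iff_of_nonneg (fun w _ => h1 v w)] at h5
      exact h5 w (Finset.mem_univ _))
  let e1 : HomPlus (cycleGraph (l+1)) (completeGraph n) ≃ₜ
      {x : ZMod (l+1) → Fin n → ℝ // x ∈ HPC l n ∧ ∑ v, ∑ w, x v w = 1} :=
    { toFun := fun f => ⟨f.1, ⟨f.2.1, fun x a => by
        by_contra! h
        exact f.2.2.2 x (x+1) (Or.inr rfl) a a h.1 h.2 rfl⟩, f.2.2.1⟩
      invFun := fun f => ⟨f.1, f.2.1.1, f.2.2, by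
        rintro x y h a b ha hb rfl
        rcases h with rfl | rfl
        · exact (f.2.1.2 y a).elim hb ha
        · exact (f.2.1.2 x a).elim ha hb⟩
      left_inv := fun f => rfl
      right_inv := fun f => rfl
      continuous_toFun := Continuous.subtype_mk continuous_subtype_val _
      continuous_invFun := Continuous.subtype_mk continuous_subtype_val _ }
  let e2 : {x : ZMod (l+1) → Fin n → ℝ // x ∈ HPC l n ∧ x ≠ 0} ≃ₜ
      {x : Fin n → DC l // x ≠ fun _ => dc0 l} :=
    { toFun := fun f => ⟨fun a => ⟨fun i => if i ≤ l then f.1 (i : ZMod (l+1)) a else 0, by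
          refine ⟨?_, ?_, ?_, ?_⟩
          · intro i; dsimp only; split_ifs
            · exact f.2.1.1 _ _
            · exact le_rfl
          · intro i hi
            have := f.2.1.2 i a
            dsimp only
            rw [if_pos (by omega), if_pos (by omega)]
            push_cast; exact this
          · have := f.2.1.2 l a
            have h0 : ((l : ZMod (l+1)) + 1) = 0 := by
              exact_mod_cast ZMod.natCast_self (l+1)
            rw [h0] at this
            simpa using this
          · intro i hi; exact if_neg (by omega)⟩, by
          intro h
          apply f.2.2
          funext v a
          have := congrFun (congrArg Subtype.val (congrFun h a)) v.val
          simp only [dc0, Pi.zero_apply] at this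
          rw [if_pos (Nat.lt_succ_iff.1 v.val_lt)] at this
          simpa using this⟩
      invFun := fun g => ⟨fun v a => (g.1 a).1 v.val, ⟨fun v a => (g.1 a).2.1 _, by
          intro x a
          have hx := x.val_lt
          dsimp only
          by_cases h : x.val = l
          · have : x + 1 = 0 := by
              rw [← ZMod.natCast_zmod_val x, h]; exact_mod_cast ZMod.natCast_self (l+1)
            rw [this, h, ZMod.val_zero]
            exact (g.1 a).2.2.2.1
          · have : (x+1).val = x.val + 1 := by
              rw [← ZMod.natCast_zmod_val x]
              have := ZMod.val_cast_of_lt (n := l+1) (a := x.val + 1) (by omega)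
              push_cast at this
              rw [this, ZMod.natCast_zmod_val x]
            rw [this]
            exact (g.1 a).2.2.1 _ (by omega)⟩, by
          intro h
          apply g.2
          funext a
          apply Subtype.ext
          funext i
          simp only [dc0, Pi.zero_apply]
          by_cases hi : i ≤ l
          · have := congrFun (congrFun h (i : ZMod (l+1))) a
            rw [ZMod.val_cast_of_lt (by omega)] at this
            exact this
          · exact (g.1 a).2.2.2.2 i (by omega)⟩
      left_inv := by
        intro f
        apply Subtype.ext
        funext v a
        simp only
        rw [if_pos (Nat.lt_succ_iff.1 v.val_lt)]
        simp
      right_inv := by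
        intro g
        apply Subtype.ext
        funext a
        apply Subtype.ext
        funext i
        simp only
        split_ifs with hi
        · rw [ZMod.val_cast_of_lt (by omega)]
        · exact ((g.1 a).2.2.2.2 i (by omega)).symm
      continuous_toFun := by
        refine Continuous.subtype_mk (continuous_pi fun a => Continuous.subtype_mk
          (continuous_pi fun i => ?_) _) _
        split_ifs
        · exact (continuous_apply a).comp ((continuous_apply _).comp continuous_subtype_val)
        · fun_prop
      continuous_invFun := by
        refine Continuous.subtype_mk (continuous_pi fun v => continuous_pi fun a => ?_) _
        exact DC_cont ((continuous_apply a).comp continuous_subtype_val) _ }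
  exact ⟨e1.toHomotopyEquiv.trans (e.symm.trans e2.toHomotopyEquiv)⟩

lemma sphere_case {l : ℕ} (n j d : ℕ) (hd : d + 1 = n * (j+1))
    (h : PHE (dc0 l) ((0 : Fin j → ℝ), (0 : ℝ))) :
    Nonempty (ContinuousMap.HomotopyEquiv
      (HomPlus (cycleGraph (l+1)) (completeGraph n)) (nSphere d)) := by
  obtain ⟨e1⟩ := homPlus_cone l n
  let E := EuclideanSpace ℝ (Fin (d+1))
  let L : (Fin n → (Fin j → ℝ) × ℝ) ≃L[ℝ] E := ContinuousLinearEquiv.ofFinrankEq (by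
    simp [E, Module.finrank_pi_fintype, hd])
  obtain ⟨e2⟩ := ((h.pi n).trans (PHE.ofHomeo (y0 := (0 : E)) L.toHomeomorph (by
    exact L.map_zero))).toHE
  obtain ⟨e3⟩ := radial (Set.univ : Set E) (by simp) (fun x => ‖x‖) continuous_norm
    (fun x t ht => by rw [norm_smul, Real.norm_of_nonneg ht.le]) norm_zero
    (fun x _ hx => norm_pos_iff.2 hx)
  let e4 : {y : E // y ≠ 0} ≃ₜ {x : E // x ∈ Set.univ ∧ x ≠ 0} :=
    Homeomorph.setCongr (s := {y : E | y ≠ 0}) (t := {x : E | x ∈ Set.univ ∧ x ≠ 0}) (by ext; simp)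
  let e5 : {x : E // x ∈ Set.univ ∧ ‖x‖ = 1} ≃ₜ nSphere d :=
    Homeomorph.setCongr (s := {x : E | x ∈ Set.univ ∧ ‖x‖ = 1}) (by ext; simp [E])
  exact ⟨e1.trans (e2.trans (e4.toHomotopyEquiv.trans (e3.trans e5.toHomotopyEquiv)))⟩

open scoped unitInterval

lemma collapse {X W : Type} [TopologicalSpace X] [TopologicalSpace W] [CompactSpace X] [T2Space X]
    [T2Space W] [CompactSpace W] (A : Set X) (hA : IsClosed A) (a0 : X) (ha0 : a0 ∈ A) (w0 : W)
    (e : {x : X // x ∉ A} ≃ₜ {w : W // w ≠ w0}) (H : I × X → X) (hH : Continuous H)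
    (h0 : ∀ x, H (0, x) = x) (h1 : ∀ x ∈ A, H (1, x) = a0) (hAA : ∀ t, ∀ x ∈ A, H (t, x) ∈ A) :
    Nonempty (ContinuousMap.HomotopyEquiv X W) := by
  classical
  let F : X → W := fun x => if h : x ∈ A then w0 else (e ⟨x, h⟩).1
  have FA : ∀ x ∈ A, F x = w0 := fun x h => dif_pos h
  have FB : ∀ x (h : x ∉ A), F x = (e ⟨x, h⟩).1 := fun x h => dif_neg h
  have FA' : ∀ x, F x = w0 → x ∈ A := by
    intro x h
    by_contra hx
    rw [FB x hx] at h
    exact (e ⟨x, hx⟩).2 h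
  have Finj : ∀ x y, F x = F y → x = y ∨ (x ∈ A ∧ y ∈ A) := by
    intro x y h
    by_cases hx : x ∈ A
    · rw [FA x hx] at h
      exact Or.inr ⟨hx, FA' y h.symm⟩
    · by_cases hy : y ∈ A
      · rw [FA y hy] at h
        exact Or.inr ⟨FA' x h, hy⟩
      · rw [FB x hx, FB y hy] at h
        left
        exact congrArg Subtype.val (e.injective (Subtype.ext h))
  have Fs : Function.Surjective F := by
    intro w
    by_cases hw : w = w0
    · exact ⟨a0, by rw [FA a0 ha0, hw]⟩
    · refine ⟨(e.symm ⟨w, hw⟩).1, ?_⟩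
      rw [FB _ (e.symm ⟨w, hw⟩).2]
      simp
  have Fc : Continuous F := by
    rw [continuous_iff_isClosed]
    intro Z hZ
    by_cases hw : w0 ∈ Z
    · have : (F ⁻¹' Z)ᶜ = Subtype.val '' {x : {x : X // x ∉ A} | (e x).1 ∈ Zᶜ} := by
        ext x
        simp only [Set.mem_compl_iff, Set.mem_preimage, Set.mem_image, Set.mem_ofPred_eq]
        constructor
        · intro h
          have hx : x ∉ A := fun hx => h (by rw [FA x hx]; exact hw)
          exact ⟨⟨x, hx⟩, by rwa [FB x hx] at h, rfl⟩
        · rintro ⟨y, hy, rfl⟩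
          rwa [FB y.1 y.2]
      rw [← isOpen_compl_iff, this]
      apply (hA.isOpen_compl).isOpenMap_subtype_val
      exact hZ.isOpen_compl.preimage (continuous_subtype_val.comp e.continuous)
    · have : F ⁻¹' Z = (fun w => (e.symm w).1) '' (Subtype.val ⁻¹' Z) := by
        ext x
        simp only [Set.mem_preimage, Set.mem_image]
        constructor
        · intro h
          have hx : x ∉ A := fun hx => hw (by rwa [FA x hx] at h)
          rw [FB x hx] at h
          exact ⟨e ⟨x, hx⟩, h, by simp⟩
        · rintro ⟨w, hz, rfl⟩
          rw [FB _ (e.symm w).2]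
          simpa using hz
      rw [this]
      apply IsCompact.isClosed
      apply IsCompact.image
      · refine (Topology.IsInducing.isCompact_preimage_iff
          (f := (Subtype.val : {w : W // w ≠ w0} → W)) Topology.IsInducing.subtypeVal ?_).2 ?_
        rotate_left
        · exact hZ.isCompact
        · intro z hz
          exact ⟨⟨z, fun h => hw (h ▸ hz)⟩, rfl⟩
      · exact continuous_subtype_val.comp e.symm.continuous
  have qF : Topology.IsQuotientMap F := Fc.isClosedMap.isQuotientMap Fc Fs
  let F2 : I × X → I × W := fun p => (p.1, F p.2)
  have F2c : Continuous F2 := by fun_prop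
  have qF2 : Topology.IsQuotientMap F2 := F2c.isClosedMap.isQuotientMap F2c (by
    rintro ⟨t, w⟩
    obtain ⟨x, rfl⟩ := Fs w
    exact ⟨(t, x), rfl⟩)
  choose r hr using Fs
  let g : W → X := fun w => H (1, r w)
  have gF : ∀ x, g (F x) = H (1, x) := by
    intro x
    rcases Finj _ _ (hr (F x)) with h | ⟨h, h'⟩
    · simp only [g, h]
    · simp only [g, h1 _ h, h1 _ h']
  have gc : Continuous g := by
    rw [qF.continuous_iff]
    have : g ∘ F = fun x => H (1, x) := funext gF
    rw [this]; fun_prop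
  let K : I × W → W := fun p => F (H (p.1, r p.2))
  have KF : ∀ t x, K (t, F x) = F (H (t, x)) := by
    intro t x
    rcases Finj _ _ (hr (F x)) with h | ⟨h, h'⟩
    · simp only [K, h]
    · simp only [K, FA _ (hAA t _ h), FA _ (hAA t _ h')]
  have Kc : Continuous K := by
    rw [qF2.continuous_iff]
    have : K ∘ F2 = fun p => F (H p) := funext fun p => KF p.1 p.2
    rw [this]; fun_prop
  refine ⟨⟨⟨F, Fc⟩, ⟨g, gc⟩, ?_, ?_⟩⟩
  · refine ContinuousMap.Homotopic.symm ⟨⟨⟨H, hH⟩, ?_, ?_⟩⟩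
    · intro x; simp [h0]
    · intro x; simp [gF]
  · refine ContinuousMap.Homotopic.symm ⟨⟨⟨K, Kc⟩, ?_, ?_⟩⟩
    · intro w; simp [K, h0, hr]
    · intro w; simp [K, g]

lemma wedge_inj (N d : ℕ) : ∃ J : WedgeOfSpheres N d → (Fin N → nSphere d),
    Continuous J ∧ Function.Injective J ∧
    ∀ i x, J (Quotient.mk _ (i, x)) = fun k => if k = i then x else northPole d := by
  refine ⟨Quotient.lift (fun p k => if k = p.1 then p.2 else northPole d) ?_, ?_, ?_, ?_⟩
  · rintro ⟨i, x⟩ ⟨k, y⟩ (h | ⟨h, h'⟩)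
    · rw [h]
    · simp only at h h'
      simp [h, h']
  · apply Continuous.quotient_lift
    apply continuous_pi
    intro k
    rw [continuous_prod_of_discrete_left]
    intro i
    by_cases h : k = i
    · simp only [h, if_true]; fun_prop
    · simp only [h, if_false]; fun_prop
  · intro a b
    refine Quotient.inductionOn₂ a b ?_
    rintro ⟨i, x⟩ ⟨k, y⟩ h
    simp only [Quotient.lift_mk] at h
    apply Quotient.sound
    by_cases hik : i = k
    · subst hik
      have := congrFun h i
      simp only [if_true] at this
      left; rw [this]
    · right
      have h1 := congrFun h i
      have h2 := congrFun h k
      simp only [if_true, hik, Ne.symm hik, if_false] at h1 h2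
      exact ⟨h1, h2.symm⟩
  · intro i x; rfl

instance wedge_t2 (N d : ℕ) : T2Space (WedgeOfSpheres N d) := by
  obtain ⟨J, hc, hi, -⟩ := wedge_inj N d
  exact T2Space.of_injective_continuous hi hc

instance wedge_compact (N d : ℕ) : CompactSpace (WedgeOfSpheres N d) := by
  have : CompactSpace (nSphere d) := inferInstance
  infer_instance

lemma sphere_minus (d : ℕ) :
    Nonempty ({x : nSphere d // x ≠ northPole d} ≃ₜ EuclideanSpace ℝ (Fin d)) := by
  have : Fact (Module.finrank ℝ (EuclideanSpace ℝ (Fin (d+1))) = d + 1) := ⟨by simp⟩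
  let s := stereographic' d (northPole d)
  have h1 : s.source = {northPole d}ᶜ := stereographic'_source _
  have h2 : s.target = Set.univ := stereographic'_target _
  exact ⟨((Homeomorph.setCongr (s := {x | x ≠ northPole d}) (t := s.source) (by
    rw [h1]; rfl)).trans s.toHomeomorphSourceTarget).trans
    ((Homeomorph.setCongr h2).trans (Homeomorph.Set.univ _))⟩

lemma wedge_minus (N d : ℕ) (hN : 0 < N) : ∃ w0 : WedgeOfSpheres N d,
    Nonempty (Fin N × EuclideanSpace ℝ (Fin d) ≃ₜ {w : WedgeOfSpheres N d // w ≠ w0}) := by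
  obtain ⟨s⟩ := sphere_minus d
  let w0 : WedgeOfSpheres N d := Quotient.mk _ (⟨0, hN⟩, northPole d)
  have key : ∀ i x, (Quotient.mk _ (i, x) : WedgeOfSpheres N d) = w0 → x = northPole d := by
    intro i x h
    rcases Quotient.exact h with h | h
    · exact (Prod.ext_iff.1 h).2
    · exact h.1
  let f : Fin N × {x : nSphere d // x ≠ northPole d} → {w : WedgeOfSpheres N d // w ≠ w0} :=
    fun p => ⟨Quotient.mk _ (p.1, p.2.1), fun h => p.2.2 (key _ _ h)⟩
  have fc : Continuous f := by
    apply Continuous.subtype_mk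
    exact continuous_quotient_mk'.comp (by fun_prop)
  have fb : Function.Bijective f := by
    constructor
    · rintro ⟨i, x⟩ ⟨k, y⟩ h
      rcases Quotient.exact (congrArg Subtype.val h) with h | h
      · have := Prod.ext_iff.1 h
        exact Prod.ext this.1 (Subtype.ext this.2)
      · exact absurd h.1 x.2
    · rintro ⟨w, hw⟩
      induction w using Quotient.inductionOn with
      | h p =>
        refine ⟨(p.1, ⟨p.2, ?_⟩), rfl⟩
        intro h
        apply hw
        exact Quotient.sound (Or.inr ⟨h, rfl⟩)
  have fo : IsOpenMap f := by
    intro U hU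
    have hU' : IsOpen ((fun p : Fin N × {x : nSphere d // x ≠ northPole d} =>
        ((p.1, p.2.1) : Fin N × nSphere d)) '' U) := by
      have : IsOpenMap (Prod.map (id : Fin N → Fin N)
          (Subtype.val : {x : nSphere d // x ≠ northPole d} → nSphere d)) :=
        IsOpenMap.id.prodMap (isOpen_ne.isOpenMap_subtype_val)
      exact this U hU
    refine ⟨Quotient.mk _ '' ((fun p : Fin N × {x : nSphere d // x ≠ northPole d} =>
        ((p.1, p.2.1) : Fin N × nSphere d)) '' U), ?_, ?_⟩
    · rw [← isQuotientMap_quotient_mk'.isOpen_preimage]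
      convert hU' using 1
      ext ⟨i, x⟩
      constructor
      · rintro ⟨_, ⟨⟨k, y⟩, hy, rfl⟩, h⟩
        rcases Quotient.exact h with h | h
        · exact ⟨_, hy, h⟩
        · exact absurd h.1 y.2
      · intro h
        exact ⟨_, h, rfl⟩
    · ext w
      constructor
      · rintro ⟨_, ⟨p, hp, rfl⟩, h⟩
        exact ⟨p, hp, Subtype.ext h⟩
      · rintro ⟨p, hp, rfl⟩
        exact ⟨_, ⟨p, hp, rfl⟩, rfl⟩
  exact ⟨w0, ⟨((Homeomorph.refl _).prodCongr s.symm).trans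
    ((Equiv.ofBijective f fb).toHomeomorphOfContinuousOpen fc fo)⟩⟩

open scoped unitInterval

abbrev TE (n j : ℕ) : Type := Fin n → (Fin j → ℝ) × ℝ × ℝ

def TC (n j : ℕ) : Set (TE n j) := {x | ∀ i, |(x i).2.2| = max (x i).2.1 0}

abbrev TX (n j : ℕ) : Type := {x : TE n j // x ∈ TC n j ∧ ‖x‖ = 1}

lemma ev_cont {ι B : Type} [TopologicalSpace B] {P : (ι → B) → Prop} (i : ι) :
    Continuous fun x : {x : ι → B // P x} => x.1 i :=
  (continuous_apply i).comp continuous_subtype_val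

lemma TC_smul {n j : ℕ} {x : TE n j} (hx : x ∈ TC n j) {t : ℝ} (ht : 0 < t) : t • x ∈ TC n j := by
  intro i
  have := hx i
  simp only [Pi.smul_apply, Prod.smul_snd, Prod.smul_fst, smul_eq_mul, abs_mul, abs_of_pos ht, this]
  rw [mul_max_of_nonneg _ _ ht.le, mul_zero]

lemma TX_he {l : ℕ} (n j : ℕ) (h : PHE (dc0 l) ((0 : Fin j → ℝ), ts0)) :
    Nonempty (ContinuousMap.HomotopyEquiv
      (HomPlus (cycleGraph (l+1)) (completeGraph n)) (TX n j)) := by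
  obtain ⟨e1⟩ := homPlus_cone l n
  obtain ⟨e2⟩ := (h.pi n).toHE
  obtain ⟨e3⟩ := radial (TC n j) (fun x hx t ht => TC_smul hx ht) (fun x => ‖x‖) continuous_norm
    (fun x t ht => by rw [norm_smul, Real.norm_of_nonneg ht.le]) norm_zero
    (fun x _ hx => norm_pos_iff.2 hx)
  let e4 : {x : Fin n → (Fin j → ℝ) × TS // x ≠ fun _ => ((0 : Fin j → ℝ), ts0)} ≃ₜ
      {x : TE n j // x ∈ TC n j ∧ x ≠ 0} :=
    { toFun := fun x => ⟨fun i => ((x.1 i).1, (x.1 i).2.1), fun i => (x.1 i).2.2, by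
        intro h
        apply x.2
        funext i
        have := Prod.ext_iff.1 (congrFun h i)
        exact Prod.ext this.1 (Subtype.ext this.2)⟩
      invFun := fun x => ⟨fun i => ((x.1 i).1, ⟨(x.1 i).2, x.2.1 i⟩), by
        intro h
        apply x.2.2
        funext i
        have := Prod.ext_iff.1 (congrFun h i)
        exact Prod.ext this.1 (congrArg Subtype.val this.2)⟩
      left_inv := fun x => rfl
      right_inv := fun x => rfl
      continuous_toFun := by
        apply Continuous.subtype_mk
        apply continuous_pi
        intro i
        exact (continuous_fst.comp (ev_cont i)).prodMk
          (continuous_subtype_val.comp (continuous_snd.comp (ev_cont i)))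
      continuous_invFun := by
        apply Continuous.subtype_mk
        apply continuous_pi
        intro i
        apply Continuous.prodMk
        · exact continuous_fst.comp (ev_cont i)
        · apply Continuous.subtype_mk
          exact continuous_snd.comp (ev_cont i) }
  exact ⟨e1.trans (e2.trans (e4.toHomotopyEquiv.trans e3))⟩

instance TX_compact (n j : ℕ) : CompactSpace (TX n j) := by
  have : IsCompact {x : TE n j | x ∈ TC n j ∧ ‖x‖ = 1} := by
    apply (isCompact_sphere (0 : TE n j) 1).of_isClosed_subset
    · apply IsClosed.and
      · have : TC n j = ⋂ i, {x | |(x i).2.2| = max (x i).2.1 0} := by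
          ext; simp [TC]
        show IsClosed (TC n j)
        rw [this]
        apply isClosed_iInter
        intro i
        exact isClosed_eq (by fun_prop) (by fun_prop)
      · exact isClosed_eq (by fun_prop) (by fun_prop)
    · intro x hx
      simpa using hx.2
  exact isCompact_iff_compactSpace.1 this

lemma TX_bd {n j : ℕ} (x : TX n j) (i : Fin n) : |(x.1 i).2.1| ≤ 1 ∧ |(x.1 i).2.2| ≤ 1 := by
  have h := x.2.2
  have h1 := norm_le_pi_norm x.1 i
  have h2 := norm_snd_le (x.1 i)
  have h3 := norm_snd_le (x.1 i).2
  have h4 := norm_fst_le (x.1 i).2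
  rw [Real.norm_eq_abs] at h3 h4
  constructor <;> linarith

def tP {n j : ℕ} (x : TE n j) : ℝ := ∏ i, max (x i).2.1 0

lemma tP_cont {n j : ℕ} : Continuous (tP : TE n j → ℝ) := by
  unfold tP; fun_prop

lemma tP_mem {n j : ℕ} (x : TX n j) : 0 ≤ tP x.1 ∧ tP x.1 ≤ 1 := by
  constructor
  · exact Finset.prod_nonneg fun i _ => le_max_right _ _
  · apply Finset.prod_le_one
    · exact fun i _ => le_max_right _ _
    · intro i _
      exact max_le ((le_abs_self _).trans (TX_bd x i).1) zero_le_one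

def tK {n j : ℕ} (s : ℝ) (x : TE n j) : TE n j := fun i =>
  ((1 - s * (1 - tP x)) • (x i).1, max ((x i).2.1 - 2 * (s * (1 - tP x))) (-1),
    (x i).2.2 - max (-(2 * (s * (1 - tP x)))) (min (x i).2.2 (2 * (s * (1 - tP x)))))

lemma tK_cont {n j : ℕ} : Continuous fun p : ℝ × TE n j => tK p.1 p.2 := by
  have := tP_cont (n := n) (j := j)
  unfold tK
  fun_prop

lemma tK_mem {n j : ℕ} (s : I) (x : TX n j) : tK s x.1 ∈ TC n j := by
  intro i
  have h1 := x.2.1 i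
  have h2 : 0 ≤ (s : ℝ) * (1 - tP x.1) := mul_nonneg s.2.1 (sub_nonneg.2 (tP_mem x).2)
  simp only [tK]
  generalize (s : ℝ) * (1 - tP x.1) = r at *
  generalize (x.1 i).2.2 = u at *
  generalize (x.1 i).2.1 = v at *
  grind

lemma tK_zero {n j : ℕ} (x : TX n j) : tK 0 x.1 = x.1 := by
  funext i
  have h := (TX_bd x i).1
  have h' := abs_le.1 h
  simp only [tK, zero_mul, sub_zero, mul_zero, one_smul, neg_zero]
  refine Prod.ext rfl (Prod.ext ?_ ?_)
  · simp [h'.1]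
  · simp only []
    grind

lemma tK_ne {n j : ℕ} (s : I) (x : TX (n+1) j) : tK s x.1 ≠ 0 := by
  intro h
  have hP := tP_mem x
  have h2 : 0 ≤ (s : ℝ) * (1 - tP x.1) := mul_nonneg s.2.1 (sub_nonneg.2 hP.2)
  have a1 : ∀ i, (1 - (s : ℝ) * (1 - tP x.1)) • (x.1 i).1 = 0 := fun i =>
    congrArg Prod.fst (congrFun h i)
  have a2 : ∀ i, (x.1 i).2.1 = 2 * (s * (1 - tP x.1)) := by
    intro i
    have : max ((x.1 i).2.1 - 2 * (s * (1 - tP x.1))) (-1) = 0 :=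
      congrArg (fun p => p.2.1) (congrFun h i)
    grind
  have b0 := a2 0
  have b1 := (abs_le.1 (TX_bd x 0).1).2
  have c1 : 1 - (s : ℝ) * (1 - tP x.1) ≠ 0 := by intro h; linarith
  have a3 : ∀ i, (x.1 i).1 = 0 := fun i => (smul_eq_zero.1 (a1 i)).resolve_left c1
  have a4 : ‖x.1‖ ≤ 2 * (s * (1 - tP x.1)) := by
    rw [pi_norm_le_iff_of_nonneg (by positivity)]
    intro i
    have hu := x.2.1 i
    rw [a2 i, max_eq_left (by positivity)] at hu
    rw [Prod.norm_def, Prod.norm_def, a3 i, a2 i, Real.norm_eq_abs, Real.norm_eq_abs, hu,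
      abs_of_nonneg (by positivity)]
    simp only [norm_zero, max_self]
    exact max_le (by positivity) le_rfl
  rw [x.2.2] at a4
  have a5 : ∀ i, (x.1 i).2.1 = 1 := by intro i; rw [a2 i]; linarith
  have : tP x.1 = 1 := by simp [tP, a5]
  rw [this] at a4
  norm_num at a4

def tA (n j : ℕ) : Set (TX n j) := {x | ∃ i, (x.1 i).2.1 ≤ 0}

lemma tA_closed (n j : ℕ) : IsClosed (tA n j) := by
  have : tA n j = ⋃ i, {x | (x.1 i).2.1 ≤ 0} := by ext; simp [tA]
  rw [this]
  apply isClosed_iUnion_of_finite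
  intro i
  exact isClosed_le (continuous_fst.comp (continuous_snd.comp (ev_cont i))) continuous_const

lemma tA_P {n j : ℕ} {x : TX n j} (hx : x ∈ tA n j) : tP x.1 = 0 := by
  obtain ⟨i, hi⟩ := hx
  exact Finset.prod_eq_zero (Finset.mem_univ i) (max_eq_right hi)

def ta0 (n j : ℕ) : TX (n+1) j := ⟨fun _ => (0, -1, 0), fun i => by simp, by
  simp [Prod.norm_def]⟩

def tH (n j : ℕ) : C(I × TX (n+1) j, TX (n+1) j) where
  toFun p := ⟨‖tK p.1 p.2.1‖⁻¹ • tK p.1 p.2.1,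
    TC_smul (tK_mem _ _) (inv_pos.2 (norm_pos_iff.2 (tK_ne _ _))), by
      rw [norm_smul, norm_inv, norm_norm, inv_mul_cancel₀ (norm_ne_zero_iff.2 (tK_ne _ _))]⟩
  continuous_toFun := by
    apply Continuous.subtype_mk
    have hc : Continuous fun p : I × TX (n+1) j => tK (p.1 : ℝ) p.2.1 :=
      tK_cont.comp (f := fun p : I × TX (n+1) j => ((p.1 : ℝ), p.2.1)) (by fun_prop)
    exact (hc.norm.inv₀ fun p => norm_ne_zero_iff.2 (tK_ne _ _)).smul hc

lemma tH_zero (n j : ℕ) (x : TX (n+1) j) : tH n j (0, x) = x := by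
  apply Subtype.ext
  simp [tH, tK_zero, x.2.2]

lemma tH_one (n j : ℕ) (x : TX (n+1) j) (hx : x ∈ tA (n+1) j) : tH n j (1, x) = ta0 n j := by
  have h : tK 1 x.1 = (ta0 n j).1 := by
    funext i
    have h1 := abs_le.1 (TX_bd x i).1
    have h2 := abs_le.1 (TX_bd x i).2
    simp only [tK, tA_P hx, ta0]
    refine Prod.ext (by simp) (Prod.ext ?_ ?_)
    · simp only []
      grind
    · simp only []
      grind
  apply Subtype.ext
  simp [tH, h, (ta0 n j).2.2]

lemma tH_A (n j : ℕ) (t : I) (x : TX (n+1) j) (hx : x ∈ tA (n+1) j) :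
    tH n j (t, x) ∈ tA (n+1) j := by
  have hP := tA_P hx
  obtain ⟨i, hi⟩ := hx
  refine ⟨i, ?_⟩
  simp only [tH, ContinuousMap.coe_mk, Pi.smul_apply, Prod.smul_snd, Prod.smul_fst, smul_eq_mul]
  apply mul_nonpos_of_nonneg_of_nonpos (by positivity)
  simp only [tK, hP]
  have := t.2.1
  apply max_le <;> linarith

def tg {n : ℕ} (w : Fin n → ℝ) : Fin (n+1) → ℝ := Fin.cons 1 (fun i => Real.exp (w i))

lemma tg_pos {n : ℕ} (w : Fin n → ℝ) (i : Fin (n+1)) : 0 < tg w i := by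
  refine Fin.cases ?_ (fun i => ?_) i
  · simp [tg]
  · simp [tg, Real.exp_pos]

lemma tg_cont {n : ℕ} : Continuous (tg : (Fin n → ℝ) → Fin (n+1) → ℝ) := by
  apply continuous_pi
  intro i
  refine Fin.cases ?_ (fun i => ?_) i
  · simp only [tg, Fin.cons_zero]; fun_prop
  · simp only [tg, Fin.cons_succ]; fun_prop

abbrev TQ (n j : ℕ) : Type := (Fin (n+1) → Bool) × ((Fin n → ℝ) × (Fin (n+1) → Fin j → ℝ))

def tY {n j : ℕ} (q : TQ n j) : TE (n+1) j := fun i =>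
  (q.2.2 i, tg q.2.1 i, if q.1 i then tg q.2.1 i else - tg q.2.1 i)

lemma tY_cont {n j : ℕ} : Continuous (tY : TQ n j → TE (n+1) j) := by
  rw [continuous_prod_of_discrete_left]
  intro b
  have := tg_cont (n := n)
  apply continuous_pi
  intro i
  unfold tY
  by_cases h : b i = true
  · simp only [h, if_true]; fun_prop
  · simp only [h, Bool.false_eq_true, if_false]; fun_prop

lemma tY_mem {n j : ℕ} (q : TQ n j) : tY q ∈ TC (n+1) j := by
  intro i
  have := tg_pos q.2.1 i
  simp only [tY]
  split_ifs <;> simp [abs_of_pos this, this.le]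

lemma tY_ne {n j : ℕ} (q : TQ n j) : tY q ≠ 0 := by
  intro h
  have : tg q.2.1 0 = 0 := congrArg (fun p => p.2.1) (congrFun h 0)
  exact (tg_pos q.2.1 0).ne' this

lemma tA_pos {n j : ℕ} (x : {x : TX n j // x ∉ tA n j}) (i : Fin n) : 0 < (x.1.1 i).2.1 := by
  by_contra h
  exact x.2 ⟨i, not_lt.1 h⟩

lemma tA_abs {n j : ℕ} (x : {x : TX n j // x ∉ tA n j}) (i : Fin n) :
    |(x.1.1 i).2.2| = (x.1.1 i).2.1 := by
  rw [x.1.2.1 i, max_eq_left (tA_pos x i).le]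

def tFwd {n j : ℕ} (x : {x : TX (n+1) j // x ∉ tA (n+1) j}) : TQ n j :=
  (fun i => decide (0 < (x.1.1 i).2.2),
    fun i => Real.log (x.1.1 i.succ).2.1 - Real.log (x.1.1 0).2.1,
    fun i => (x.1.1 0).2.1⁻¹ • (x.1.1 i).1)

lemma tFwd_cont {n j : ℕ} : Continuous (tFwd (n := n) (j := j)) := by
  have c : ∀ i, Continuous fun x : {x : TX (n+1) j // x ∉ tA (n+1) j} => (x.1.1 i).2.1 :=
    fun i => continuous_fst.comp (continuous_snd.comp ((ev_cont i).comp continuous_subtype_val))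
  have d : ∀ i, Continuous fun x : {x : TX (n+1) j // x ∉ tA (n+1) j} => (x.1.1 i).2.2 :=
    fun i => continuous_snd.comp (continuous_snd.comp ((ev_cont i).comp continuous_subtype_val))
  refine Continuous.prodMk ?_ (Continuous.prodMk ?_ ?_)
  · apply continuous_pi
    intro i
    rw [continuous_bool_rng true]
    constructor
    · have : ((fun x : {x : TX (n+1) j // x ∉ tA (n+1) j} => decide (0 < (x.1.1 i).2.2)) ⁻¹' {true})
          = {x | 0 ≤ (x.1.1 i).2.2} := by
        ext x
        have h1 := tA_abs x i
        have h2 := tA_pos x i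
        simp
        grind
      rw [this]
      exact isClosed_le continuous_const (d i)
    · have : ((fun x : {x : TX (n+1) j // x ∉ tA (n+1) j} => decide (0 < (x.1.1 i).2.2)) ⁻¹' {true})
          = {x | 0 < (x.1.1 i).2.2} := by
        ext x
        simp
      rw [this]
      exact isOpen_lt continuous_const (d i)
  · apply continuous_pi
    intro i
    exact ((c _).log fun x => (tA_pos x _).ne').sub ((c _).log fun x => (tA_pos x _).ne')
  · apply continuous_pi
    intro i
    exact ((c _).inv₀ fun x => (tA_pos x _).ne').smul
      (continuous_fst.comp ((ev_cont i).comp continuous_subtype_val))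

def tBwd {n j : ℕ} (q : TQ n j) : {x : TX (n+1) j // x ∉ tA (n+1) j} :=
  ⟨⟨‖tY q‖⁻¹ • tY q, TC_smul (tY_mem _) (inv_pos.2 (norm_pos_iff.2 (tY_ne _))), by
      rw [norm_smul, norm_inv, norm_norm, inv_mul_cancel₀ (norm_ne_zero_iff.2 (tY_ne _))]⟩, by
    rintro ⟨i, hi⟩
    have : 0 < ‖tY q‖⁻¹ * tg q.2.1 i :=
      mul_pos (inv_pos.2 (norm_pos_iff.2 (tY_ne _))) (tg_pos _ _)
    exact absurd hi (not_le.2 this)⟩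

lemma tBwd_cont {n j : ℕ} : Continuous (tBwd (n := n) (j := j)) := by
  apply Continuous.subtype_mk
  apply Continuous.subtype_mk
  exact (tY_cont.norm.inv₀ fun p => norm_ne_zero_iff.2 (tY_ne _)).smul tY_cont

lemma tFwdY {n j : ℕ} (x : {x : TX (n+1) j // x ∉ tA (n+1) j}) :
    tY (tFwd x) = (x.1.1 0).2.1⁻¹ • x.1.1 := by
  have h0 := tA_pos x 0
  have hg : ∀ i, tg (tFwd x).2.1 i = (x.1.1 0).2.1⁻¹ * (x.1.1 i).2.1 := by
    intro i
    refine Fin.cases ?_ (fun i => ?_) i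
    · simp [tg, h0.ne']
    · simp only [tg, tFwd, Fin.cons_succ]
      rw [Real.exp_sub, Real.exp_log (tA_pos x _), Real.exp_log h0, div_eq_inv_mul]
  funext i
  refine Prod.ext rfl (Prod.ext (hg i) ?_)
  have h1 := tA_abs x i
  have h2 := tA_pos x i
  simp only [tY, hg, Pi.smul_apply, Prod.smul_snd, smul_eq_mul]
  by_cases h : 0 < (x.1.1 i).2.2
  · have : (tFwd x).1 i = true := by simp [tFwd, h]
    rw [if_pos this, ← h1, abs_of_pos h]
  · have : ¬ (tFwd x).1 i = true := by simp only [tFwd, decide_eq_true_eq]; exact h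
    rw [if_neg this, ← h1, abs_of_nonpos (not_lt.1 h)]
    ring

lemma tBF {n j : ℕ} (x : {x : TX (n+1) j // x ∉ tA (n+1) j}) : tBwd (tFwd x) = x := by
  have h0 := tA_pos x 0
  apply Subtype.ext
  apply Subtype.ext
  simp only [tBwd, tFwdY]
  rw [norm_smul, x.1.2.2, smul_smul]
  simp [abs_of_pos h0, h0.ne']

lemma tFB {n j : ℕ} (q : TQ n j) : tFwd (tBwd q) = q := by
  have hc : 0 < ‖tY q‖⁻¹ := inv_pos.2 (norm_pos_iff.2 (tY_ne _))
  refine Prod.ext ?_ (Prod.ext ?_ ?_)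
  · funext i
    have := tg_pos q.2.1 i
    rw [Bool.eq_iff_iff]
    refine decide_eq_true_iff.trans ?_
    simp only [tBwd, Pi.smul_apply, Prod.smul_snd, Prod.smul_fst, smul_eq_mul]
    generalize ‖tY q‖⁻¹ = c at hc ⊢
    by_cases h : q.1 i = true
    · simp [tY, h, hc, this]
    · simp [tY, h, hc, this, this.le]
  · funext i
    simp only [tFwd, tBwd, Pi.smul_apply, Prod.smul_snd, Prod.smul_fst, smul_eq_mul]
    generalize ‖tY q‖⁻¹ = c at hc ⊢
    simp only [tY]
    rw [Real.log_mul hc.ne' (tg_pos _ _).ne', Real.log_mul hc.ne' (tg_pos _ _).ne']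
    simp [tg]
  · funext i
    simp only [tFwd, tBwd, Pi.smul_apply, Prod.smul_snd, Prod.smul_fst, smul_eq_mul]
    generalize ‖tY q‖⁻¹ = c at hc ⊢
    simp only [tY, tg, Fin.cons_zero, mul_one]
    rw [smul_smul, inv_mul_cancel₀ hc.ne', one_smul]

def tHomeo (n j : ℕ) : {x : TX (n+1) j // x ∉ tA (n+1) j} ≃ₜ TQ n j where
  toFun := tFwd
  invFun := tBwd
  left_inv := tBF
  right_inv := tFB
  continuous_toFun := tFwd_cont
  continuous_invFun := tBwd_cont

lemma wedge_case {l : ℕ} (n j d : ℕ) (hd : d + 1 = (n+1) * (j+1))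
    (h : PHE (dc0 l) ((0 : Fin j → ℝ), ts0)) :
    Nonempty (ContinuousMap.HomotopyEquiv
      (HomPlus (cycleGraph (l+1)) (completeGraph (n+1))) (WedgeOfSpheres (2^(n+1)) d)) := by
  obtain ⟨e1⟩ := TX_he (n+1) j h
  obtain ⟨w0, ⟨e2⟩⟩ := wedge_minus (2^(n+1)) d (by positivity)
  let L : ((Fin n → ℝ) × (Fin (n+1) → Fin j → ℝ)) ≃L[ℝ] EuclideanSpace ℝ (Fin d) :=
    ContinuousLinearEquiv.ofFinrankEq (by
      simp [Module.finrank_pi_fintype]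
      have : (n+1) * (j+1) = (n+1)*j + n + 1 := by ring
      omega)
  let b : (Fin (n+1) → Bool) ≃ Fin (2^(n+1)) := Fintype.equivFinOfCardEq (by simp)
  let b' : (Fin (n+1) → Bool) ≃ₜ Fin (2^(n+1)) :=
    { b with
      continuous_toFun := continuous_of_discreteTopology
      continuous_invFun := continuous_of_discreteTopology }
  obtain ⟨e3⟩ := collapse (tA (n+1) j) (tA_closed _ _) (ta0 n j) ⟨0, by simp [ta0]⟩ w0
    ((tHomeo n j).trans ((b'.prodCongr L.toHomeomorph).trans e2)) (tH n j) (tH n j).continuous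
    (tH_zero n j) (tH_one n j) (tH_A n j)
  exact ⟨e1.trans e3⟩

lemma final_main (m n k : ℕ) (hm : 2 ≤ m) (hn : 1 ≤ n) :
    (m = 3 * k → Nonempty (ContinuousMap.HomotopyEquiv
        (HomPlus (cycleGraph m) (completeGraph n)) (WedgeOfSpheres (2 ^ n) (n * k - 1)))) ∧
    ((m = 3 * k + 1 ∨ m = 3 * k - 1) → Nonempty (ContinuousMap.HomotopyEquiv
        (HomPlus (cycleGraph m) (completeGraph n)) (nSphere (n * k - 1)))) := by
  obtain ⟨n, rfl⟩ : ∃ a, n = a + 1 := ⟨n - 1, by omega⟩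
  rcases k with _ | j
  · constructor
    · omega
    · omega
  have hd : (n+1) * (j+1) - 1 + 1 = (n+1) * (j+1) := Nat.sub_add_cancel (Nat.mul_pos n.succ_pos j.succ_pos)
  refine ⟨?_, ?_⟩
  · rintro h
    obtain rfl : m = (2 + 3 * j) + 1 := by omega
    exact wedge_case n j _ hd (iter (by omega) base2 j)
  · rintro (h | h)
    · obtain rfl : m = (3 + 3 * j) + 1 := by omega
      exact sphere_case (n+1) j _ hd (iter (by omega) base3 j)
    · obtain rfl : m = (1 + 3 * j) + 1 := by omega
      exact sphere_case (n+1) j _ hd (iter (by omega) base1 j)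

/-- The homotopy type of `Hom₊(C_m, K_n)`: a wedge of `2^n` copies of `S^{nk-1}` if `m = 3k`,
and `S^{nk-1}` if `m = 3k ± 1`. -/
theorem homPlus_cycle_complete_homotopy_type (m n k : ℕ) (hm : 2 ≤ m) (hn : 1 ≤ n) :
    (m = 3 * k → Nonempty (ContinuousMap.HomotopyEquiv
        (HomPlus (cycleGraph m) (completeGraph n)) (WedgeOfSpheres (2 ^ n) (n * k - 1)))) ∧
    ((m = 3 * k + 1 ∨ m = 3 * k - 1) → Nonempty (ContinuousMap.HomotopyEquiv
        (HomPlus (cycleGraph m) (completeGraph n)) (nSphere (n * k - 1)))) := by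
  exact final_main m n k hm hn

end Lovasz
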